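/- Let n ≥ 3 and let Q₀ be a real quadratic form on ℝ^n satisfying the volume asymptotic condition with constant c₀ > 0. Then for every δ > 0, for Haar-almost every g ∈ SL(n,ℝ), there exists ε₀ > 0 such that for every ε with 0 < ε < ε₀ there is a nonzero x ∈ ℤ^n with ‖gx‖ < ε^{-(1/(n-2) + δ)} and 0 < Q₀(gx) < ε. -/

import Mathlib

open MeasureTheory Matrix Filter Asymptotics

/-- The Euclidean norm of a vector in `ℝ^n`. -/
noncomputable def euclNorm {n : ℕ} (x : Fin n → ℝ) : ℝ := Real.sqrt (∑ i, x i ^ 2)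

/-- The quadratic form `x ↦ xᵀ M x` attached to a matrix `M`. -/
def Qform {n : ℕ} (M : Matrix (Fin n) (Fin n) ℝ) (x : Fin n → ℝ) : ℝ := x ⬝ᵥ M.mulVec x

/-- The quadratic form of `M` satisfies the volume asymptotic condition with constant `c₀`:
for all `a < b`, `|Q₀⁻¹((a,b)) ∩ B(0,T)| = c₀ (b-a) T^{n-2} + o(T^{n-2})` as `T → ∞`. -/
def volumeAsymp {n : ℕ} (M : Matrix (Fin n) (Fin n) ℝ) (c₀ : ℝ) : Prop :=
  ∀ a b : ℝ, a < b →
    (fun T : ℝ =>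
        (volume {x : Fin n → ℝ | Qform M x ∈ Set.Ioo a b ∧ euclNorm x ≤ T}).toReal
          - c₀ * (b - a) * T ^ (n - 2)) =o[atTop] fun T : ℝ => T ^ (n - 2)

/-- `SL(n, ℝ)`. -/
abbrev SLR (n : ℕ) := Matrix.SpecialLinearGroup (Fin n) ℝ

instance (n : ℕ) : TopologicalSpace (SLR n) :=
  TopologicalSpace.induced (fun g : SLR n => (g : Matrix (Fin n) (Fin n) ℝ)) inferInstance

noncomputable instance (n : ℕ) : MeasurableSpace (SLR n) := borel _

section FiniteField

variable {p n : ℕ} [Fact p.Prime]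

lemma card_ker_mul_pow {W : Type*} [AddCommGroup W] [Module (ZMod p) W]
    (f : (Fin n → ZMod p) →ₗ[ZMod p] W) (hf : LinearMap.range f = ⊤)
    (P : (Fin n → ZMod p) → Prop) [DecidablePred P] (hP : ∀ ξ, P ξ ↔ f ξ = 0) :
    (Finset.univ.filter P).card * p ^ Module.finrank (ZMod p) W = p ^ n := by
  have h := LinearMap.finrank_range_add_finrank_ker f
  rw [hf, finrank_top, Module.finrank_fin_fun] at h
  have hk : Nat.card (LinearMap.ker f) = p ^ Module.finrank (ZMod p) (LinearMap.ker f) := by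
    rw [Module.natCard_eq_pow_finrank (K := ZMod p), Nat.card_zmod]
  have hc : Nat.card (LinearMap.ker f) = (Finset.univ.filter P).card :=
    Nat.subtype_card _ fun ξ => by simp [hP]
  rw [← hc, hk, ← pow_add, add_comm, h]

lemma card_dotProduct_eq_zero {x : Fin n → ZMod p} (hx : x ≠ 0) :
    (Finset.univ.filter fun ξ : Fin n → ZMod p => ξ ⬝ᵥ x = 0).card * p = p ^ n := by
  have h := card_ker_mul_pow ((dotProductBilin (ZMod p) (ZMod p)).flip x) ?_
    (fun ξ : Fin n → ZMod p => ξ ⬝ᵥ x = 0) (fun ξ => Iff.rfl)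
  · simpa using h
  · obtain ⟨i, hi⟩ := Function.ne_iff.mp hx
    rw [LinearMap.range_eq_top]
    intro c
    refine ⟨Pi.single i (c * (x i)⁻¹), ?_⟩
    change Pi.single i (c * (x i)⁻¹) ⬝ᵥ x = c
    rw [single_dotProduct, mul_assoc, inv_mul_cancel₀ hi, mul_one]

lemma card_dotProduct_pair_eq_zero {x y : Fin n → ZMod p} {i j : Fin n}
    (hxy : x i * y j - x j * y i ≠ 0) :
    (Finset.univ.filter fun ξ : Fin n → ZMod p => ξ ⬝ᵥ x = 0 ∧ ξ ⬝ᵥ y = 0).card * p ^ 2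
      = p ^ n := by
  have h := card_ker_mul_pow (((dotProductBilin (ZMod p) (ZMod p)).flip x).prod
    ((dotProductBilin (ZMod p) (ZMod p)).flip y)) ?_
    (fun ξ : Fin n → ZMod p => ξ ⬝ᵥ x = 0 ∧ ξ ⬝ᵥ y = 0) (fun ξ => by
      change _ ↔ (ξ ⬝ᵥ x, ξ ⬝ᵥ y) = 0
      rw [Prod.mk_eq_zero])
  · simpa using h
  · rw [LinearMap.range_eq_top]
    rintro ⟨a, b⟩
    set D := x i * y j - x j * y i with hD
    refine ⟨Pi.single i ((a * y j - b * x j) * D⁻¹) + Pi.single j ((b * x i - a * y i) * D⁻¹), ?_⟩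
    refine Prod.ext ?_ ?_
    · change (_ + _) ⬝ᵥ x = a
      rw [add_dotProduct, single_dotProduct, single_dotProduct]
      field_simp
      rw [hD]; ring
    · change (_ + _) ⬝ᵥ y = b
      rw [add_dotProduct, single_dotProduct, single_dotProduct]
      field_simp
      rw [hD]; ring

/-- Second moment bound: if the vectors of `S` are, up to sign, pairwise independent modulo `p`,
then few hyperplanes modulo `p` avoid all of `S`. -/
lemma card_avoiding_mul_card_le (S : Finset (Fin n → ZMod p)) (hS : ∀ x ∈ S, x ≠ 0)
    (hpair : ∀ x ∈ S, ∀ y ∈ S, y ≠ x → y ≠ -x → ∃ i j, x i * y j - x j * y i ≠ 0) :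
    (Finset.univ.filter fun ξ : Fin n → ZMod p => ∀ x ∈ S, ξ ⬝ᵥ x ≠ 0).card * S.card
      ≤ 2 * p * p ^ n := by
  classical
  set Bad := Finset.univ.filter fun ξ : Fin n → ZMod p => ∀ x ∈ S, ξ ⬝ᵥ x ≠ 0 with hBad
  have hp : (0 : ℝ) < p := by exact_mod_cast (Fact.out : p.Prime).pos
  let e : (Fin n → ZMod p) → (Fin n → ZMod p) → ℝ := fun ξ x => if ξ ⬝ᵥ x = 0 then 1 else 0
  set N : ℝ := (S.card : ℝ) with hN
  have h1 : ∀ x ∈ S, ∑ ξ, e ξ x = (p : ℝ) ^ n / p := by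
    intro x hx
    have h := card_dotProduct_eq_zero (hS x hx)
    simp only [e, Finset.sum_boole]
    rw [eq_div_iff hp.ne']
    exact_mod_cast h
  have h2 : ∀ x ∈ S, ∀ y ∈ S, ∑ ξ, e ξ x * e ξ y ≤ (p : ℝ) ^ n / p ^ 2 +
      ((if y = x then (p : ℝ) ^ n / p else 0) + (if y = -x then (p : ℝ) ^ n / p else 0)) := by
    intro x hx y hy
    by_cases hxy : y = x ∨ y = -x
    · have : ∑ ξ, e ξ x * e ξ y ≤ (p : ℝ) ^ n / p := by
        rw [← h1 x hx]
        refine Finset.sum_le_sum fun ξ _ => ?_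
        simp only [e]; split_ifs <;> norm_num
      have h0 : (0 : ℝ) ≤ (p : ℝ) ^ n / p := by positivity
      have h0' : (0 : ℝ) ≤ (p : ℝ) ^ n / p ^ 2 := by positivity
      rcases hxy with h | h
      · rw [if_pos h]; split_ifs <;> linarith
      · rw [if_pos h]; split_ifs <;> linarith
    · push Not at hxy
      obtain ⟨i, j, hij⟩ := hpair x hx y hy hxy.1 hxy.2
      have h := card_dotProduct_pair_eq_zero hij
      rw [if_neg hxy.1, if_neg hxy.2, add_zero, add_zero, le_div_iff₀ (by positivity)]
      refine le_of_eq ?_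
      have : ∀ ξ, e ξ x * e ξ y = if ξ ⬝ᵥ x = 0 ∧ ξ ⬝ᵥ y = 0 then 1 else 0 := by
        intro ξ
        simp only [e, ← ite_and, mul_ite, mul_one, mul_zero]
        congr 1; rw [and_comm]
      simp only [this, Finset.sum_boole]
      exact_mod_cast h
  have h3 : ∑ ξ, (∑ x ∈ S, e ξ x) ^ 2 ≤
      N ^ 2 * ((p : ℝ) ^ n / p ^ 2) + 2 * N * ((p : ℝ) ^ n / p) := by
    have : ∑ ξ, (∑ x ∈ S, e ξ x) ^ 2 = ∑ x ∈ S, ∑ y ∈ S, ∑ ξ, e ξ x * e ξ y := by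
      simp only [sq, Finset.sum_mul_sum]
      rw [Finset.sum_comm]
      exact Finset.sum_congr rfl fun x _ => Finset.sum_comm
    rw [this]
    calc _ ≤ ∑ x ∈ S, ∑ y ∈ S, ((p : ℝ) ^ n / p ^ 2 +
          ((if y = x then (p : ℝ) ^ n / p else 0) + (if y = -x then (p : ℝ) ^ n / p else 0))) :=
          Finset.sum_le_sum fun x hx => Finset.sum_le_sum fun y hy => h2 x hx y hy
      _ ≤ ∑ x ∈ S, (N * ((p : ℝ) ^ n / p ^ 2) + 2 * ((p : ℝ) ^ n / p)) := by
          refine Finset.sum_le_sum fun x hx => ?_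
          rw [Finset.sum_add_distrib, Finset.sum_add_distrib, Finset.sum_const, nsmul_eq_mul,
            Finset.sum_ite_eq', Finset.sum_ite_eq', if_pos hx]
          have h0 : (0 : ℝ) ≤ (p : ℝ) ^ n / p := by positivity
          split_ifs <;> linarith
      _ = _ := by rw [Finset.sum_const, nsmul_eq_mul]; ring
  have h4 : ∑ ξ, (∑ x ∈ S, e ξ x) = N * ((p : ℝ) ^ n / p) := by
    rw [Finset.sum_comm, Finset.sum_congr rfl h1, Finset.sum_const, nsmul_eq_mul]
  have h5 : ∑ ξ, ((∑ x ∈ S, e ξ x) - N / p) ^ 2 ≤ 2 * N * ((p : ℝ) ^ n / p) := by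
    have : ∑ ξ, ((∑ x ∈ S, e ξ x) - N / p) ^ 2 = ∑ ξ, (∑ x ∈ S, e ξ x) ^ 2
        - 2 * (N / p) * ∑ ξ, (∑ x ∈ S, e ξ x) + (p : ℝ) ^ n * (N / p) ^ 2 := by
      rw [Finset.mul_sum, ← Finset.sum_sub_distrib]
      have hc : (p : ℝ) ^ n * (N / p) ^ 2 = ∑ _ξ : Fin n → ZMod p, (N / p) ^ 2 := by
        rw [Finset.sum_const, nsmul_eq_mul, Finset.card_univ, Fintype.card_fun, ZMod.card,
          Fintype.card_fin]; push_cast; ring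
      rw [hc, ← Finset.sum_add_distrib]
      exact Finset.sum_congr rfl fun ξ _ => by ring
    rw [this, h4]
    have : N ^ 2 * ((p : ℝ) ^ n / p ^ 2) - 2 * (N / p) * (N * ((p : ℝ) ^ n / p))
        + (p : ℝ) ^ n * (N / p) ^ 2 = 0 := by field_simp; ring
    linarith
  have h6 : (Bad.card : ℝ) * (N / p) ^ 2 ≤ 2 * N * ((p : ℝ) ^ n / p) := by
    refine le_trans ?_ h5
    rw [← nsmul_eq_mul, ← Finset.sum_const]
    refine (Finset.sum_le_sum fun ξ hξ => ?_).trans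
      (Finset.sum_le_sum_of_subset_of_nonneg (Finset.subset_univ Bad) fun _ _ _ => sq_nonneg _)
    have : ∑ x ∈ S, e ξ x = 0 := Finset.sum_eq_zero fun x hx => by
      simp only [hBad, Finset.mem_filter, Finset.mem_univ, true_and] at hξ
      exact if_neg (hξ x hx)
    rw [this]; apply le_of_eq; ring
  rcases S.card.eq_zero_or_pos with h0 | h0
  · rw [h0]; simp
  · have hNp : 0 < N := by rw [hN]; exact_mod_cast h0
    have : (Bad.card : ℝ) * N ≤ 2 * p * p ^ n := by
      have h7 : (Bad.card : ℝ) * (N / p) ^ 2 = (Bad.card * N) * (N / p ^ 2) := by ring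
      have h8 : 2 * N * ((p : ℝ) ^ n / p) = (2 * p * p ^ n) * (N / p ^ 2) := by field_simp
      rw [h7, h8] at h6
      exact le_of_mul_le_mul_right h6 (by positivity)
    rw [hN] at this
    exact_mod_cast this

end FiniteField

section Minkowski

variable {n : ℕ}

/-- Minkowski's theorem on linear forms. -/
lemma exists_int_abs_mulVec_le (G : Matrix (Fin n) (Fin n) ℝ) (hG : G.det ≠ 0) (b : Fin n → ℝ)
    (hb : ∀ j, 0 < b j) (hlt : |G.det| < ∏ j, b j) :
    ∃ x : Fin n → ℤ, x ≠ 0 ∧ ∀ j, |(G *ᵥ fun i => (x i : ℝ)) j| ≤ b j := by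
  set s : Set (Fin n → ℝ) := Matrix.toLin' G ⁻¹' Set.pi Set.univ fun j => Set.Ioo (-b j) (b j)
  have hdet : LinearMap.det (Matrix.toLin' G) = G.det := LinearMap.det_toLin' G
  have hvol : volume s = ENNReal.ofReal (|G.det|⁻¹ * (2 ^ n * ∏ j, b j)) := by
    rw [Measure.addHaar_preimage_linearMap _ (by rwa [hdet]), hdet, Real.volume_pi_Ioo,
      ← ENNReal.ofReal_prod_of_nonneg (fun j _ => by linarith [hb j]),
      ← ENNReal.ofReal_mul (abs_nonneg _), abs_inv]
    congr 2
    rw [Finset.prod_congr rfl fun j _ => show b j - -b j = 2 * b j by ring,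
      Finset.prod_mul_distrib]
    simp
  have fund : IsAddFundamentalDomain
      (Submodule.span ℤ (Set.range (Pi.basisFun ℝ (Fin n)))).toAddSubgroup
      (ZSpan.fundamentalDomain (Pi.basisFun ℝ (Fin n))) volume :=
    ZSpan.isAddFundamentalDomain (Pi.basisFun ℝ (Fin n)) volume
  have : Countable (Submodule.span ℤ (Set.range (Pi.basisFun ℝ (Fin n)))).toAddSubgroup :=
    inferInstanceAs (Countable (Submodule.span ℤ (Set.range (Pi.basisFun ℝ (Fin n)))))
  have hF : volume (ZSpan.fundamentalDomain (Pi.basisFun ℝ (Fin n))) = 1 := by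
    rw [ZSpan.fundamentalDomain_pi_basisFun, Real.volume_pi_Ico]
    simp
  have hsymm : ∀ x ∈ s, -x ∈ s := by
    intro x hx j hj
    have := hx j hj
    simp only [Set.mem_Ioo, map_neg, Pi.neg_apply] at this ⊢
    constructor <;> linarith [this.1, this.2]
  have hconv : Convex ℝ s := (convex_pi fun j _ => convex_Ioo _ _).linear_preimage _
  have hvs : volume (ZSpan.fundamentalDomain (Pi.basisFun ℝ (Fin n))) *
      2 ^ Module.finrank ℝ (Fin n → ℝ) < volume s := by
    have hpos : 0 < |G.det| := abs_pos.mpr hG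
    rw [hF, hvol, one_mul, Module.finrank_fin_fun]
    rw [show (2 : ENNReal) ^ n = ENNReal.ofReal (2 ^ n) by
      rw [ENNReal.ofReal_pow (by norm_num)]; simp]
    rw [ENNReal.ofReal_lt_ofReal_iff (by
      have := Finset.prod_pos fun j (_ : j ∈ Finset.univ) => hb j
      positivity)]
    rw [inv_mul_eq_div, lt_div_iff₀ hpos]
    gcongr
  obtain ⟨x, hx0, hx⟩ :=
    exists_ne_zero_mem_lattice_of_measure_mul_two_pow_lt_measure fund hsymm hconv hvs
  have hmem : ∀ i, ∃ z : ℤ, (z : ℝ) = (x : Fin n → ℝ) i := by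
    have := ((Pi.basisFun ℝ (Fin n)).mem_span_iff_repr_mem ℤ _).mp x.2
    simpa using this
  choose z hz using hmem
  have hzx : (fun i => (z i : ℝ)) = (x : Fin n → ℝ) := funext hz
  refine ⟨z, ?_, fun j => ?_⟩
  · rintro rfl
    apply hx0
    ext i
    rw [← hz i]; simp
  · rw [hzx]
    have := hx j (Set.mem_univ j)
    rw [Matrix.toLin'_apply] at this
    exact (abs_lt.mpr this).le

/-- A unimodular-type lattice without short vectors has a full rank system of bounded vectors. -/
lemma exists_int_matrix_abs_mul_le (hn : 2 ≤ n) {s D : ℝ} (hs : 0 < s) (hD : 0 ≤ D) :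
    ∃ C : ℝ, 0 < C ∧ ∀ g : Matrix (Fin n) (Fin n) ℝ, g.det ≠ 0 → |g.det| ≤ D →
      (∀ y : Fin n → ℤ, y ≠ 0 → ∃ j, s ≤ |(g *ᵥ fun i => (y i : ℝ)) j|) →
      ∃ V : Matrix (Fin n) (Fin n) ℤ, V.det ≠ 0 ∧
        ∀ i j, |(g * V.map (Int.cast : ℤ → ℝ)) i j| ≤ C := by
  set s' : ℝ := s / (n + 1) with hs'
  have hs'0 : 0 < s' := by positivity
  have hs's : n * s' < s := by
    rw [hs', mul_div_assoc', div_lt_iff₀ (by positivity)]; nlinarith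
  set R₀ : ℝ := (D + 1) / s' ^ (n - 1) with hR₀
  have hR₀0 : 0 < R₀ := by positivity
  have hDR : D < R₀ * s' ^ (n - 1) := by
    rw [hR₀, div_mul_cancel₀ _ (by positivity)]; linarith
  refine ⟨R₀ + s, by positivity, fun g hg hgD hshort => ?_⟩
  set C := R₀ + s
  set X : Set (Fin n → ℝ) :=
    {w | ∃ y : Fin n → ℤ, w = (g *ᵥ fun i => (y i : ℝ)) ∧ ∀ j, |w j| ≤ C}
  have hspan : Submodule.span ℝ X = ⊤ := by
    by_contra hne
    obtain ⟨φ, hφ0, hφ⟩ := Submodule.exists_le_ker_of_lt_top _ (lt_top_iff_ne_top.mpr hne)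
    set f : Fin n → ℝ := fun i => φ (Pi.single i 1)
    have hφf : ∀ w, φ w = ∑ i, w i * f i := fun w => by
      rw [LinearMap.pi_apply_eq_sum_univ φ w]
      refine Finset.sum_congr rfl fun i _ => ?_
      rw [smul_eq_mul]
      congr 2
      ext j; simp [Pi.single_apply, eq_comm]
    have : NeZero n := ⟨by omega⟩
    obtain ⟨i0, -, hi0⟩ :=
      Finset.exists_max_image Finset.univ (fun i => |f i|) ⟨0, Finset.mem_univ _⟩
    have hfi0 : f i0 ≠ 0 := fun h0 => hφ0 <| LinearMap.ext fun w => by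
      rw [hφf]
      refine Finset.sum_eq_zero fun i _ => ?_
      have := hi0 i (Finset.mem_univ i)
      rw [h0, abs_zero] at this
      rw [abs_nonpos_iff.mp this, mul_zero]
    set c : Fin n → ℝ := fun i => f i / f i0
    have hci0 : c i0 = 1 := div_self hfi0
    have hc1 : ∀ i, |c i| ≤ 1 := fun i => by
      rw [abs_div]; exact div_le_one_of_le₀ (hi0 i (Finset.mem_univ i)) (abs_nonneg _)
    have hφc : ∀ w ∈ X, ∑ i, w i * c i = 0 := fun w hw => by
      have h1 : φ w = 0 := hφ (Submodule.subset_span hw)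
      rw [hφf] at h1
      calc ∑ i, w i * c i = (∑ i, w i * f i) / f i0 := by
            rw [Finset.sum_div]; exact Finset.sum_congr rfl fun i _ => by ring
        _ = 0 := by rw [h1, zero_div]
    set G := g.updateRow i0 (∑ k, c k • g k)
    have hGdet : G.det = g.det := by
      rw [Matrix.det_updateRow_sum, hci0, one_smul]
    obtain ⟨y, hy0, hy⟩ := exists_int_abs_mulVec_le G (by rwa [hGdet])
      (fun j => if j = i0 then R₀ else s') (fun j => by split_ifs <;> assumption) (by
        rw [hGdet, ← Finset.mul_prod_erase _ _ (Finset.mem_univ i0), if_pos rfl]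
        rw [Finset.prod_congr rfl (g := fun _ => s') fun j hj => if_neg (Finset.ne_of_mem_erase hj)]
        rw [Finset.prod_const, Finset.card_erase_of_mem (Finset.mem_univ _), Finset.card_univ,
          Fintype.card_fin]
        exact hgD.trans_lt hDR)
    set w := g *ᵥ fun i => (y i : ℝ)
    have hwj : ∀ j, j ≠ i0 → |w j| ≤ s' := fun j hj => by
      have := hy j
      rw [if_neg hj] at this
      simpa [G, mulVec, Matrix.updateRow_ne hj, w] using this
    have hwi : |∑ i, w i * c i| ≤ R₀ := by
      have := hy i0
      rw [if_pos rfl] at this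
      convert! this using 2
      simp only [G, mulVec, Matrix.updateRow_self, w, dotProduct, Finset.sum_apply, Pi.smul_apply,
        smul_eq_mul, Finset.sum_mul]
      rw [Finset.sum_comm]
      exact Finset.sum_congr rfl fun k _ => Finset.sum_congr rfl fun j _ => by ring
    have hrest : |∑ i ∈ Finset.univ.erase i0, w i * c i| ≤ n * s' := by
      calc |∑ i ∈ Finset.univ.erase i0, w i * c i| ≤ ∑ i ∈ Finset.univ.erase i0, |w i * c i| :=
            Finset.abs_sum_le_sum_abs _ _
        _ ≤ ∑ i ∈ Finset.univ.erase i0, s' := Finset.sum_le_sum fun i hi => by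
            rw [abs_mul]
            calc |w i| * |c i| ≤ s' * 1 := mul_le_mul (hwj i (Finset.ne_of_mem_erase hi)) (hc1 i)
                  (abs_nonneg _) hs'0.le
              _ = s' := mul_one _
        _ ≤ n * s' := by
            rw [Finset.sum_const, nsmul_eq_mul]
            gcongr
            exact_mod_cast (Finset.card_le_univ _).trans (by simp)
    have hsplit : ∑ i, w i * c i = w i0 + ∑ i ∈ Finset.univ.erase i0, w i * c i := by
      rw [← Finset.add_sum_erase _ _ (Finset.mem_univ i0), hci0, mul_one]
    have hwX : w ∈ X := ⟨y, rfl, fun j => by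
      by_cases hj : j = i0
      · subst hj
        have : w j = (∑ i, w i * c i) - ∑ i ∈ Finset.univ.erase j, w i * c i := by
          rw [hsplit]; ring
        rw [this]
        calc _ ≤ _ := abs_sub _ _
          _ ≤ C := by simp only [C]; linarith
      · have h1 := hwj j hj
        have : s' ≤ s := by
          rw [hs']
          exact div_le_self hs.le (by linarith [Nat.cast_nonneg (α := ℝ) n])
        simp only [C]; linarith⟩
    have h0 := hφc w hwX
    obtain ⟨j, hj⟩ := hshort y hy0
    have : |w j| < s := by
      by_cases hj : j = i0
      · subst hj
        have : w j = - ∑ i ∈ Finset.univ.erase j, w i * c i := by linarith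
        rw [this, abs_neg]; linarith
      · refine (hwj j hj).trans_lt ?_
        refine lt_of_le_of_lt ?_ hs's
        have : (1 : ℝ) ≤ n := by exact_mod_cast (by omega : 1 ≤ n)
        nlinarith
    exact absurd hj (not_le.mpr this)
  obtain ⟨b, hbX, hbspan, hbli⟩ := exists_linearIndependent ℝ X
  let B : Module.Basis b ℝ (Fin n → ℝ) := Module.Basis.mk hbli (by
    rw [Subtype.range_coe, hbspan, hspan])
  let e := (Pi.basisFun ℝ (Fin n)).indexEquiv B
  have hBX : ∀ j, (e j : Fin n → ℝ) ∈ X := fun j => hbX (e j).2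
  choose y hy hyC using hBX
  have hgV : ∀ i j, (g * (Matrix.of fun i j => y j i).map (Int.cast : ℤ → ℝ)) i j
      = (e j : Fin n → ℝ) i := fun i j => by
    rw [hy j]; simp [Matrix.mul_apply, mulVec, dotProduct]
  refine ⟨Matrix.of fun i j => y j i, fun h0 => ?_, fun i j => ?_⟩
  · have hli : LinearIndependent ℝ (fun j => (e j : Fin n → ℝ)) := hbli.comp e e.injective
    have hu : IsUnit (g * (Matrix.of fun i j => y j i).map (Int.cast : ℤ → ℝ)) := by
      rw [← Matrix.linearIndependent_cols_iff_isUnit]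
      convert! hli using 1
      ext j i
      exact hgV i j
    rw [Matrix.isUnit_iff_isUnit_det, Matrix.det_mul] at hu
    have : ((Matrix.of fun i j => y j i).map (Int.cast : ℤ → ℝ)).det = 0 := by
      rw [← Int.cast_det, h0, Int.cast_zero]
    rw [this, mul_zero] at hu
    exact not_isUnit_zero hu
  · rw [hgV]; exact hyC j i

end Minkowski

section Hecke

variable {m p : ℕ}

/-- The integer matrix `x ↦ (p x₀, x_j - η_j x₀)`, whose preimages of `ℤ^(m+1)` are Hecke
neighbours of the standard lattice. -/
def heckeMatrix (p : ℕ) (η : Fin m → ZMod p) : Matrix (Fin (m + 1)) (Fin (m + 1)) ℤ :=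
  Matrix.of (Fin.cons (Fin.cons (p : ℤ) 0)
    fun j => Fin.cons (-((η j).val : ℤ)) (Pi.single j 1))

/-- The matrix `p • (heckeMatrix p η)⁻¹`. -/
def heckeDual (p : ℕ) (η : Fin m → ZMod p) : Matrix (Fin (m + 1)) (Fin (m + 1)) ℤ :=
  Matrix.of (Fin.cons (Fin.cons 1 0) fun j => Fin.cons ((η j).val : ℤ) (Pi.single j (p : ℤ)))

lemma heckeMatrix_mulVec_zero (η : Fin m → ZMod p) (x : Fin (m + 1) → ℤ) :
    (heckeMatrix p η *ᵥ x) 0 = p * x 0 := by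
  simp [heckeMatrix, mulVec, dotProduct, Fin.sum_univ_succ]

lemma heckeMatrix_mulVec_succ (η : Fin m → ZMod p) (x : Fin (m + 1) → ℤ) (j : Fin m) :
    (heckeMatrix p η *ᵥ x) j.succ = x j.succ - (η j).val * x 0 := by
  simp [heckeMatrix, mulVec, dotProduct, Fin.sum_univ_succ, Pi.single_apply]
  ring

lemma heckeDual_mulVec_zero (η : Fin m → ZMod p) (x : Fin (m + 1) → ℤ) :
    (heckeDual p η *ᵥ x) 0 = x 0 := by
  simp [heckeDual, mulVec, dotProduct, Fin.sum_univ_succ]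

lemma heckeDual_mulVec_succ (η : Fin m → ZMod p) (x : Fin (m + 1) → ℤ) (j : Fin m) :
    (heckeDual p η *ᵥ x) j.succ = (η j).val * x 0 + p * x j.succ := by
  simp [heckeDual, mulVec, dotProduct, Fin.sum_univ_succ, Pi.single_apply]

lemma heckeMatrix_mulVec_heckeDual_zero (η η' : Fin m → ZMod p) (x : Fin (m + 1) → ℤ) :
    ((heckeMatrix p η * heckeDual p η') *ᵥ x) 0 = p * x 0 := by
  rw [← mulVec_mulVec, heckeMatrix_mulVec_zero, heckeDual_mulVec_zero]

lemma heckeMatrix_mulVec_heckeDual_succ (η η' : Fin m → ZMod p) (x : Fin (m + 1) → ℤ)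
    (j : Fin m) : ((heckeMatrix p η * heckeDual p η') *ᵥ x) j.succ
      = p * x j.succ + ((η' j).val - (η j).val) * x 0 := by
  rw [← mulVec_mulVec, heckeMatrix_mulVec_succ, heckeDual_mulVec_zero, heckeDual_mulVec_succ]
  ring

lemma heckeMatrix_mul_heckeDual (η : Fin m → ZMod p) :
    heckeMatrix p η * heckeDual p η = (p : ℤ) • (1 : Matrix _ _ ℤ) := by
  refine Matrix.toLin'.injective (LinearMap.ext fun x => funext fun i => ?_)
  rw [Matrix.toLin'_apply, Matrix.toLin'_apply, smul_mulVec, one_mulVec]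
  refine Fin.cases ?_ (fun j => ?_) i
  · rw [heckeMatrix_mulVec_heckeDual_zero]; simp
  · rw [heckeMatrix_mulVec_heckeDual_succ]; simp

lemma heckeDual_mul_heckeMatrix (η : Fin m → ZMod p) :
    heckeDual p η * heckeMatrix p η = (p : ℤ) • (1 : Matrix _ _ ℤ) := by
  refine Matrix.toLin'.injective (LinearMap.ext fun x => funext fun i => ?_)
  rw [Matrix.toLin'_apply, Matrix.toLin'_apply, smul_mulVec, one_mulVec, ← mulVec_mulVec]
  refine Fin.cases ?_ (fun j => ?_) i
  · rw [heckeDual_mulVec_zero, heckeMatrix_mulVec_zero]; simp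
  · rw [heckeDual_mulVec_succ, heckeMatrix_mulVec_zero, heckeMatrix_mulVec_succ]; simp; ring

lemma det_heckeDual (η : Fin m → ZMod p) : (heckeDual p η).det = (p : ℤ) ^ m := by
  rw [Matrix.det_of_isLowerTriangular, Fin.prod_univ_succ]
  · simp [heckeDual]
  · intro i j hij
    have hij : i < j := hij
    induction i using Fin.cases with
    | zero =>
      obtain ⟨k, rfl⟩ := Fin.exists_succ_eq.mpr hij.ne'
      simp [heckeDual]
    | succ i =>
      induction j using Fin.cases with
      | zero => exact absurd hij (Fin.not_lt_zero _)
      | succ k =>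
        have : k ≠ i := by rintro rfl; exact lt_irrefl _ hij
        simp [heckeDual, this]

open Classical in
/-- At most half of the Hecke neighbours have a short vector. -/
lemma two_mul_card_short_le [Fact p.Prime] (N : ℕ) (hN : 1 ≤ N) (hp : p ≤ 2 * N ^ (m + 1)) :
    2 * (Finset.univ.filter fun η : Fin m → ZMod p => ∃ y : Fin (m + 1) → ℤ, y ≠ 0 ∧
      ∀ i, 12 * N * |(heckeDual p η *ᵥ y) i| < p).card ≤ p ^ m := by
  have hp0 : 0 < p := (Fact.out : p.Prime).pos
  set b : ℤ := (p : ℤ) / (12 * N) with hb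
  have hN' : (0 : ℤ) < 12 * N := by positivity
  have hb0 : 0 ≤ b := Int.ediv_nonneg (by positivity) hN'.le
  have hbp : b * (12 * N) ≤ p := Int.ediv_mul_le _ hN'.ne'
  have hle : ∀ z : ℤ, 12 * N * |z| < p → |z| ≤ b := fun z hz => by
    rw [hb, Int.le_ediv_iff_mul_le hN']; linarith
  have hbltp : b < p := by
    have : (1 : ℤ) ≤ N := by exact_mod_cast hN
    have h2 : (0 : ℤ) < p := by exact_mod_cast hp0
    nlinarith
  set I := Finset.Icc (-b) b
  set F : ℤ × (Fin m → ℤ) → (Fin m → ZMod p) := fun q j => (q.2 j : ZMod p) / (q.1 : ZMod p)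
  have hsub : (Finset.univ.filter fun η : Fin m → ZMod p => ∃ y : Fin (m + 1) → ℤ, y ≠ 0 ∧
      ∀ i, 12 * N * |(heckeDual p η *ᵥ y) i| < p) ⊆
      ((I.erase 0) ×ˢ Fintype.piFinset fun _ : Fin m => I).image F := by
    intro η hη
    obtain ⟨y, hy0, hy⟩ := (Finset.mem_filter.mp hη).2
    have h0 : |y 0| ≤ b := hle _ (by have := hy 0; rwa [heckeDual_mulVec_zero] at this)
    have hs : ∀ j : Fin m, |(η j).val * y 0 + p * y j.succ| ≤ b := fun j =>
      hle _ (by have := hy j.succ; rwa [heckeDual_mulVec_succ] at this)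
    have hy00 : y 0 ≠ 0 := fun h => hy0 <| by
      funext i
      refine Fin.cases h (fun j => ?_) i
      have h1 := hs j
      rw [h, mul_zero, zero_add, abs_mul, Nat.abs_cast] at h1
      by_contra hne
      have : 1 ≤ |y j.succ| := Int.one_le_abs hne
      nlinarith
    rw [Finset.mem_image]
    refine ⟨(y 0, fun j => (η j).val * y 0 + p * y j.succ), ?_, ?_⟩
    · rw [Finset.mem_product]
      refine ⟨Finset.mem_erase.mpr ⟨hy00, Finset.mem_Icc.mpr (abs_le.mp h0)⟩, ?_⟩
      rw [Fintype.mem_piFinset]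
      exact fun j => Finset.mem_Icc.mpr (abs_le.mp (hs j))
    · funext j
      have hyp : (y 0 : ZMod p) ≠ 0 := by
        rw [Ne, ZMod.intCast_zmod_eq_zero_iff_dvd]
        intro hd
        have := Int.le_of_dvd (abs_pos.mpr hy00) ((dvd_abs _ _).mpr hd)
        linarith
      simp only [F]
      push_cast
      rw [ZMod.natCast_self, zero_mul, add_zero, mul_div_assoc, div_self hyp, mul_one,
        ZMod.natCast_val, ZMod.cast_id]
  have hcard := (Finset.card_le_card hsub).trans Finset.card_image_le
  rw [Finset.card_product, Fintype.card_piFinset, Finset.prod_const, Finset.card_univ,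
    Fintype.card_fin, Finset.card_erase_of_mem (Finset.mem_Icc.mpr ⟨by linarith, hb0⟩)] at hcard
  obtain ⟨c, hc⟩ := Int.eq_ofNat_of_zero_le hb0
  have hIc : I.card = 2 * c + 1 := by
    simp only [I, Int.card_Icc]; omega
  rw [hIc, Nat.add_sub_cancel] at hcard
  have hcN : c * (12 * N) ≤ p := by rw [hc] at hbp; exact_mod_cast hbp
  have h1 : 2 * c * (2 * c + 1) ^ m ≤ (3 * c) ^ (m + 1) := by
    rcases Nat.eq_zero_or_pos c with h | h
    · simp [h]
    · rw [pow_succ']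
      gcongr <;> omega
  have h2 : (12 * c) ^ (m + 1) * N ^ (m + 1) ≤ p ^ (m + 1) := by
    rw [← mul_pow]; exact Nat.pow_le_pow_left (by linarith) _
  have hNpos : 0 < N ^ (m + 1) := by positivity
  have h3 : (12 * c) ^ (m + 1) ≤ 2 * p ^ m := by
    refine Nat.le_of_mul_le_mul_right (h2.trans ?_) hNpos
    calc p ^ (m + 1) = p ^ m * p := pow_succ _ _
      _ ≤ p ^ m * (2 * N ^ (m + 1)) := Nat.mul_le_mul_left _ hp
      _ = _ := by ring
  have h4 : (12 * c) ^ (m + 1) = 4 ^ (m + 1) * (3 * c) ^ (m + 1) := by rw [← mul_pow]; ring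
  have h5 : 4 ≤ 4 ^ (m + 1) := by
    rw [pow_succ]; have := Nat.one_le_pow m 4 (by norm_num); omega
  have h6 := Nat.mul_le_mul_right ((3 * c) ^ (m + 1)) h5
  omega

end Hecke

section MatrixBounds

variable {n m p : ℕ}

/-- Matrices with entries at most `R` and determinant at least `R⁻¹` in absolute value. -/
def InBox (R : ℝ) (h : Matrix (Fin n) (Fin n) ℝ) : Prop :=
  (∀ i j, |h i j| ≤ R) ∧ R⁻¹ ≤ |h.det|

lemma abs_det_le {R : ℝ} {h : Matrix (Fin n) (Fin n) ℝ} (hh : ∀ i j, |h i j| ≤ R) :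
    |h.det| ≤ n.factorial * R ^ n := by
  have := Matrix.det_le (A := h) (abv := IsAbsoluteValue.toAbsoluteValue (abs : ℝ → ℝ)) (x := R) hh
  simpa using this

lemma abs_mul_apply_le {a b : ℝ} {A B : Matrix (Fin n) (Fin n) ℝ} (ha : ∀ i j, |A i j| ≤ a)
    (hb : ∀ i j, |B i j| ≤ b) (i j : Fin n) : |(A * B) i j| ≤ n * (a * b) := by
  rw [Matrix.mul_apply]
  calc |∑ k, A i k * B k j| ≤ ∑ k, |A i k * B k j| := Finset.abs_sum_le_sum_abs _ _
    _ ≤ ∑ _k : Fin n, a * b := Finset.sum_le_sum fun k _ => by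
        rw [abs_mul]
        exact mul_le_mul (ha i k) (hb k j) (abs_nonneg _) ((abs_nonneg _).trans (ha i k))
    _ = n * (a * b) := by simp

lemma abs_mulVec_le {a b : ℝ} {A : Matrix (Fin n) (Fin n) ℝ} {v : Fin n → ℝ}
    (ha : ∀ i j, |A i j| ≤ a) (hb : ∀ j, |v j| ≤ b) (i : Fin n) :
    |(A *ᵥ v) i| ≤ n * (a * b) := by
  calc |∑ k, A i k * v k| ≤ ∑ k, |A i k * v k| := Finset.abs_sum_le_sum_abs _ _
    _ ≤ ∑ _k : Fin n, a * b := Finset.sum_le_sum fun k _ => by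
        rw [abs_mul]
        exact mul_le_mul (ha i k) (hb k) (abs_nonneg _) ((abs_nonneg _).trans (ha i k))
    _ = n * (a * b) := by simp

lemma InBox.det_ne_zero {R : ℝ} (hR : 1 ≤ R) {h : Matrix (Fin n) (Fin n) ℝ} (hh : InBox R h) :
    h.det ≠ 0 := fun h0 => by
  have := hh.2
  rw [h0, abs_zero] at this
  have : 0 < R⁻¹ := by positivity
  linarith

lemma InBox.abs_inv_le {R : ℝ} (hR : 1 ≤ R) {h : Matrix (Fin n) (Fin n) ℝ} (hh : InBox R h)
    (i j : Fin n) : |h⁻¹ i j| ≤ n.factorial * R ^ (n + 1) := by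
  have hadj : |h.adjugate i j| ≤ n.factorial * R ^ n := by
    rw [adjugate_apply]
    refine abs_det_le fun k l => ?_
    by_cases hk : k = j
    · subst hk
      rw [updateRow_self, Pi.single_apply]
      split_ifs <;> simp <;> linarith
    · rw [updateRow_ne hk]
      exact hh.1 k l
  rw [Matrix.inv_def, Matrix.smul_apply, smul_eq_mul, abs_mul, Ring.inverse_eq_inv', abs_inv]
  have h1 : |h.det|⁻¹ ≤ R := inv_le_of_inv_le₀ (by linarith) hh.2
  calc |h.det|⁻¹ * |h.adjugate i j| ≤ R * (n.factorial * R ^ n) :=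
        mul_le_mul h1 hadj (abs_nonneg _) (by linarith)
    _ = _ := by ring

/-- The change of basis matrix from `h` to the Hecke neighbour described by `η`, with respect to
the frame `V`. -/
noncomputable def heckeFrame (N : ℕ) (η : Fin m → ZMod p)
    (V : Matrix (Fin (m + 1)) (Fin (m + 1)) ℤ) :
    Matrix (Fin (m + 1)) (Fin (m + 1)) ℝ :=
  ((N : ℝ) / p) • (heckeDual p η * V).map (Int.cast : ℤ → ℝ)

lemma det_heckeFrame (hp : p ≠ 0) (N : ℕ) (η : Fin m → ZMod p)
    (V : Matrix (Fin (m + 1)) (Fin (m + 1)) ℤ) :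
    (heckeFrame N η V).det = N ^ (m + 1) / p * V.det := by
  have hp' : (p : ℝ) ≠ 0 := by exact_mod_cast hp
  rw [heckeFrame, det_smul, ← Int.cast_det, det_mul, det_heckeDual, Fintype.card_fin]
  rw [Int.cast_mul, Int.cast_pow, Int.cast_natCast, div_pow, pow_succ (p : ℝ)]
  field_simp

lemma exists_inBox_mul_heckeFrame (hm : 1 ≤ m) {R : ℝ} (hR : 1 ≤ R) :
    ∃ R' : ℝ, 1 ≤ R' ∧ ∃ D : ℕ, ∀ h : Matrix (Fin (m + 1)) (Fin (m + 1)) ℝ, InBox R h →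
      ∀ N p : ℕ, 1 ≤ N → N ^ (m + 1) ≤ p → p ≤ 2 * N ^ (m + 1) → ∀ η : Fin m → ZMod p,
      (¬ ∃ y : Fin (m + 1) → ℤ, y ≠ 0 ∧ ∀ i, 12 * N * |(heckeDual p η *ᵥ y) i| < p) →
      ∃ V : Matrix (Fin (m + 1)) (Fin (m + 1)) ℤ, V.det ≠ 0 ∧ |V.det| ≤ D ∧
        InBox R' (h * heckeFrame N η V) := by
  set n := m + 1 with hn
  have hR0 : 0 < R := by linarith
  set ρ : ℝ := n.factorial * R ^ (n + 1)
  have hρ : 0 < ρ := by positivity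
  have hn0 : (0 : ℝ) < n := by positivity
  set s : ℝ := 1 / (24 * (n * ρ)) with hs
  have hs0 : 0 < s := by positivity
  obtain ⟨C, hC, hCV⟩ := exists_int_matrix_abs_mul_le (n := n) (by omega) hs0
    (D := n.factorial * R ^ n) (by positivity)
  refine ⟨max (max C (2 * R)) 1, le_max_right _ _, ⌈2 * R * (n.factorial * C ^ n)⌉₊, ?_⟩
  intro h hh N p hN hp1 hp2 η hη
  have hN0 : (0 : ℝ) < N := by exact_mod_cast hN
  have hp0 : (0 : ℝ) < p := by exact_mod_cast (Nat.one_le_pow n N hN).trans hp1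
  have hp1' : (N : ℝ) ^ n ≤ p := by exact_mod_cast hp1
  have hp2' : (p : ℝ) ≤ 2 * N ^ n := by exact_mod_cast hp2
  set q : ℝ := (N : ℝ) ^ n / p with hq
  have hq1 : q ≤ 1 := div_le_one_of_le₀ hp1' hp0.le
  have hq2 : 1 / 2 ≤ q := by rw [hq, le_div_iff₀ hp0]; linarith
  set g := h * heckeFrame N η 1 with hg
  have hpnat : p ≠ 0 := by rintro rfl; simp at hp0
  have hgdet : g.det = q * h.det := by
    rw [hg, det_mul, det_heckeFrame hpnat]; simp; ring
  have hhdet : h.det ≠ 0 := hh.det_ne_zero hR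
  have habs : |g.det| = q * |h.det| := by
    rw [hgdet, abs_mul, abs_of_pos (by linarith)]
  obtain ⟨V, hV0, hV⟩ := hCV g (by rw [hgdet]; exact mul_ne_zero (by linarith) hhdet) (by
      rw [habs]
      calc q * |h.det| ≤ 1 * |h.det| := by gcongr
        _ ≤ _ := by rw [one_mul]; exact abs_det_le hh.1) (by
      intro y hy
      by_contra! hlt
      refine hη ⟨y, hy, fun i => ?_⟩
      have h1 : h⁻¹ *ᵥ (g *ᵥ fun i => (y i : ℝ)) = heckeFrame N η 1 *ᵥ fun i => (y i : ℝ) := by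
        rw [hg, mulVec_mulVec, ← Matrix.mul_assoc, nonsing_inv_mul _ hhdet.isUnit, Matrix.one_mul]
      have h2 := abs_mulVec_le (A := h⁻¹) (hh.abs_inv_le hR) (fun j => (hlt j).le) i
      have h3 : (heckeFrame N η 1 *ᵥ fun i => (y i : ℝ)) i
          = N / p * ((heckeDual p η *ᵥ y) i : ℤ) := by
        rw [heckeFrame, smul_mulVec, Pi.smul_apply, smul_eq_mul, Matrix.mul_one]
        simp [mulVec, dotProduct]
      have h4 : (n : ℝ) * (ρ * s) = 1 / 24 := by rw [hs]; field_simp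
      rw [h1, h3, h4, abs_mul, abs_of_pos (by positivity), div_mul_eq_mul_div,
        div_le_iff₀ hp0] at h2
      have h5 : (12 * N * |((heckeDual p η *ᵥ y) i : ℝ)| : ℝ) < p := by linarith
      exact_mod_cast h5)
  have hVr : V.map (Int.cast : ℤ → ℝ) = (1 : Matrix (Fin n) (Fin n) ℤ).map (Int.cast : ℤ → ℝ)
      * V.map (Int.cast : ℤ → ℝ) := by
    simp
  have hgV : h * heckeFrame N η V = g * V.map (Int.cast : ℤ → ℝ) := by
    rw [hg, heckeFrame, heckeFrame, Matrix.mul_one, Matrix.mul_assoc, Matrix.smul_mul,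
      ← Matrix.map_mul_intCast]
  have hdet' : |(h * heckeFrame N η V).det| = q * |h.det| * |(V.det : ℝ)| := by
    rw [hgV, det_mul, abs_mul, habs, Int.cast_det]
  have hV1 : (1 : ℝ) ≤ |(V.det : ℝ)| := by exact_mod_cast Int.one_le_abs hV0
  have hhR : R⁻¹ ≤ |h.det| := hh.2
  have hRi : 0 < R⁻¹ := by positivity
  refine ⟨V, hV0, ?_, fun i j => ?_, ?_⟩
  · have h1 : |(h * heckeFrame N η V).det| ≤ n.factorial * C ^ n := by
      rw [hgV]; exact abs_det_le hV
    rw [hdet'] at h1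
    have h2 : (1 / 2) * R⁻¹ ≤ q * |h.det| := by gcongr
    have h3 : (1 / 2) * R⁻¹ * |(V.det : ℝ)| ≤ n.factorial * C ^ n :=
      (mul_le_mul_of_nonneg_right h2 (abs_nonneg _)).trans h1
    have h4 : |(V.det : ℝ)| ≤ 2 * R * (n.factorial * C ^ n) := by
      calc |(V.det : ℝ)| = 2 * R * ((1 / 2) * R⁻¹ * |(V.det : ℝ)|) := by field_simp
        _ ≤ _ := by gcongr
    have h5 := h4.trans (Nat.le_ceil _)
    exact_mod_cast h5
  · rw [hgV]
    exact (hV i j).trans ((le_max_left _ _).trans (le_max_left _ _))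
  · rw [hdet']
    calc (max (max C (2 * R)) 1)⁻¹ ≤ (2 * R)⁻¹ :=
          inv_anti₀ (by positivity) ((le_max_right _ _).trans (le_max_left _ _))
      _ = 1 / 2 * R⁻¹ * 1 := by rw [mul_inv]; ring
      _ ≤ q * |h.det| * |(V.det : ℝ)| := by gcongr

end MatrixBounds

section Count

variable {m p : ℕ}

lemma map_smul_intCast {n : ℕ} (a : ℤ) (A : Matrix (Fin n) (Fin n) ℤ) :
    (a • A).map (Int.cast : ℤ → ℝ) = (a : ℝ) • A.map (Int.cast : ℤ → ℝ) := by
  ext i j; simp only [map_apply, Matrix.smul_apply, smul_eq_mul, Int.cast_mul]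

lemma map_one_intCast {n : ℕ} :
    (1 : Matrix (Fin n) (Fin n) ℤ).map (Int.cast : ℤ → ℝ) = 1 := by
  simp

lemma heckeFrame_inv {N : ℕ} (hN : N ≠ 0) (hp : p ≠ 0) (η : Fin m → ZMod p)
    {V : Matrix (Fin (m + 1)) (Fin (m + 1)) ℤ} (hV : V.det ≠ 0) :
    (heckeFrame N η V)⁻¹
      = ((N : ℝ) * V.det)⁻¹ • (V.adjugate * heckeMatrix p η).map (Int.cast : ℤ → ℝ) := by
  have hN' : (N : ℝ) ≠ 0 := by exact_mod_cast hN
  have hp' : (p : ℝ) ≠ 0 := by exact_mod_cast hp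
  have hV' : (V.det : ℝ) ≠ 0 := by exact_mod_cast hV
  refine Matrix.inv_eq_right_inv ?_
  have h1 : heckeDual p η * V * (V.adjugate * heckeMatrix p η)
      = (V.det * p) • (1 : Matrix _ _ ℤ) := by
    rw [Matrix.mul_assoc, ← Matrix.mul_assoc V, mul_adjugate, Matrix.smul_mul, Matrix.one_mul,
      Matrix.mul_smul, heckeDual_mul_heckeMatrix, smul_smul]
  rw [heckeFrame, Matrix.smul_mul, Matrix.mul_smul, ← Matrix.map_mul_intCast, h1,
    map_smul_intCast, map_one_intCast, smul_smul, smul_smul]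
  rw [Int.cast_mul, Int.cast_natCast,
    show (N : ℝ) / p * (N * (V.det : ℝ))⁻¹ * ((V.det : ℝ) * p) = 1 by field_simp, one_smul]

lemma heckeFrame_mul_inv {N : ℕ} (hN : N ≠ 0) (hp : p ≠ 0) (η η' : Fin m → ZMod p)
    (V' : Matrix (Fin (m + 1)) (Fin (m + 1)) ℤ)
    {V : Matrix (Fin (m + 1)) (Fin (m + 1)) ℤ} (hV : V.det ≠ 0) :
    heckeFrame N η' V' * (heckeFrame N η V)⁻¹ = ((p : ℝ) * V.det)⁻¹ •
      (heckeDual p η' * V' * (V.adjugate * heckeMatrix p η)).map (Int.cast : ℤ → ℝ) := by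
  have hN' : (N : ℝ) ≠ 0 := by exact_mod_cast hN
  have hp' : (p : ℝ) ≠ 0 := by exact_mod_cast hp
  have hV' : (V.det : ℝ) ≠ 0 := by exact_mod_cast hV
  rw [heckeFrame_inv hN hp η hV, heckeFrame, Matrix.smul_mul, Matrix.mul_smul,
    ← Matrix.map_mul_intCast, smul_smul]
  congr 1
  field_simp

lemma dvd_heckeDual_mul_apply [Fact p.Prime] (η η' : Fin m → ZMod p)
    (V V' : Matrix (Fin (m + 1)) (Fin (m + 1)) ℤ) {c : ZMod p}
    (hc : (fun i => (V' 0 i : ZMod p)) = c • fun i => (V 0 i : ZMod p)) (i j : Fin (m + 1)) :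
    (p : ℤ) ∣ (heckeDual p η' * V' * (V.adjugate * heckeMatrix p η)) i j := by
  set Y := V' * (V.adjugate * heckeMatrix p η) with hY
  have h1 : V * (V.adjugate * heckeMatrix p η) = V.det • heckeMatrix p η := by
    rw [← Matrix.mul_assoc, mul_adjugate, Matrix.smul_mul, Matrix.one_mul]
  have h0 : (p : ℤ) ∣ Y 0 j := by
    rw [← ZMod.intCast_zmod_eq_zero_iff_dvd]
    have h2 : (((V * (V.adjugate * heckeMatrix p η)) 0 j : ℤ) : ZMod p) = 0 := by
      rw [h1]
      refine Fin.cases ?_ (fun k => ?_) j <;> simp [heckeMatrix]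
    rw [hY, Matrix.mul_apply]
    rw [Matrix.mul_apply] at h2
    push_cast at h2 ⊢
    have hc' : ∀ k, (V' 0 k : ZMod p) = c * (V 0 k : ZMod p) := fun k => congrFun hc k
    simp only [hc', mul_assoc]
    rw [← Finset.mul_sum, h2, mul_zero]
  have h3 : (heckeDual p η' * V' * (V.adjugate * heckeMatrix p η)) i j
      = (heckeDual p η' *ᵥ fun k => Y k j) i := by
    rw [Matrix.mul_assoc, ← hY, Matrix.mul_apply]; rfl
  rw [h3]
  refine Fin.cases ?_ (fun k => ?_) i
  · rwa [heckeDual_mulVec_zero]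
  · rw [heckeDual_mulVec_succ]
    exact dvd_add (h0.mul_left _) (dvd_mul_right _ _)

lemma eq_of_adjugate_mul_heckeMatrix_eq [Fact p.Prime] {η η' : Fin m → ZMod p}
    {V V' : Matrix (Fin (m + 1)) (Fin (m + 1)) ℤ} (hV : V.det ≠ 0) (hVp : V.det.natAbs < p)
    (hdet : V.det = V'.det)
    (h : V.adjugate * heckeMatrix p η = V'.adjugate * heckeMatrix p η') : η = η' ∧ V = V' := by
  have hp : (p : ℤ) ≠ 0 := by exact_mod_cast (Fact.out : p.Prime).ne_zero
  have hη : η = η' := by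
    have h1 : (p : ℤ) • (V' * V.adjugate) = V.det • (heckeMatrix p η' * heckeDual p η) := by
      calc (p : ℤ) • (V' * V.adjugate)
          = V' * (V.adjugate * (heckeMatrix p η * heckeDual p η)) := by
            rw [heckeMatrix_mul_heckeDual, Matrix.mul_smul, Matrix.mul_smul, Matrix.mul_one]
        _ = V' * ((V.adjugate * heckeMatrix p η) * heckeDual p η) := by rw [Matrix.mul_assoc]
        _ = V' * V'.adjugate * (heckeMatrix p η' * heckeDual p η) := by
            rw [h]; simp only [Matrix.mul_assoc]
        _ = _ := by rw [mul_adjugate, hdet, Matrix.smul_mul, Matrix.one_mul]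
    funext j
    have h2 := congrFun (congrArg (fun X : Matrix _ _ ℤ => X *ᵥ Pi.single 0 1) h1) j.succ
    simp only [smul_mulVec, Pi.smul_apply, heckeMatrix_mulVec_heckeDual_succ, smul_eq_mul,
      Pi.single_eq_same, mul_one, Pi.single_eq_of_ne (Fin.succ_ne_zero j), mul_zero,
      zero_add] at h2
    have h3 : (p : ℤ) ∣ V.det * (((η j).val : ℤ) - (η' j).val) := ⟨_, h2.symm⟩
    rcases (Nat.prime_iff_prime_int.mp Fact.out).dvd_or_dvd h3 with h4 | h4
    · have h5 := Int.natAbs_dvd_natAbs.mpr h4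
      rw [Int.natAbs_natCast] at h5
      have := Nat.le_of_dvd (Int.natAbs_pos.mpr hV) h5
      omega
    · rw [← ZMod.intCast_zmod_eq_zero_iff_dvd] at h4
      push_cast at h4
      simpa [sub_eq_zero] using h4
  subst hη
  refine ⟨rfl, ?_⟩
  have h1 : (p : ℤ) • V.adjugate = (p : ℤ) • V'.adjugate := by
    have := congrArg (· * heckeDual p η) h
    simpa only [Matrix.mul_assoc, heckeMatrix_mul_heckeDual, Matrix.mul_smul,
      Matrix.mul_one] using this
  have h2 : V.adjugate = V'.adjugate := smul_right_injective _ hp h1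
  have h3 : V.det • V = V.det • V' := by
    calc V.det • V = V' * V'.adjugate * V := by
          rw [mul_adjugate, hdet, Matrix.smul_mul, Matrix.one_mul]
      _ = V' * (V.adjugate * V) := by rw [h2, Matrix.mul_assoc]
      _ = V.det • V' := by rw [adjugate_mul, Matrix.mul_smul, Matrix.mul_one]
  exact smul_right_injective _ hV h3

lemma heckeFrame_det_ne_zero {N : ℕ} (hN : N ≠ 0) (hp : p ≠ 0) (η : Fin m → ZMod p)
    {V : Matrix (Fin (m + 1)) (Fin (m + 1)) ℤ} (hV : V.det ≠ 0) :
    (heckeFrame N η V).det ≠ 0 := by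
  have hN' : (N : ℝ) ≠ 0 := by exact_mod_cast hN
  have hp' : (p : ℝ) ≠ 0 := by exact_mod_cast hp
  have hV' : (V.det : ℝ) ≠ 0 := by exact_mod_cast hV
  rw [det_heckeFrame hp]
  positivity

/-- Few Hecke neighbours give rise to the same line modulo `p`. -/
lemma exists_card_collinear_le (m D : ℕ) {R : ℝ} (hR : 1 ≤ R) :
    ∃ C₁ : ℕ, ∀ N p : ℕ, N ≠ 0 → p.Prime → D < p →
      ∀ (g : Matrix (Fin (m + 1)) (Fin (m + 1)) ℝ) (ξ : Fin (m + 1) → ZMod p)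
        (T : Finset ((Fin m → ZMod p) × Matrix (Fin (m + 1)) (Fin (m + 1)) ℤ)),
      (∀ τ ∈ T, τ.2.det ≠ 0 ∧ |τ.2.det| ≤ D ∧ InBox R (g * (heckeFrame N τ.1 τ.2)⁻¹) ∧
        ∃ c : ZMod p, c ≠ 0 ∧ ξ = c • fun i => (τ.2 0 i : ZMod p)) → T.card ≤ C₁ := by
  set n := m + 1 with hn
  set B : ℝ := n * ((n.factorial * R ^ (n + 1)) * R) with hB
  set L : ℤ := ⌈(D : ℝ) * B⌉
  set W : Finset (ℤ × (Fin n → Fin n → ℤ)) :=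
    Finset.Icc (-D : ℤ) D ×ˢ Finset.Icc (fun _ _ => -L) (fun _ _ => L)
  refine ⟨W.card, fun N p hN hp hDp g ξ T hT => ?_⟩
  have : Fact p.Prime := ⟨hp⟩
  have hp' : (p : ℝ) ≠ 0 := by exact_mod_cast hp.ne_zero
  have hpz : (p : ℤ) ≠ 0 := by exact_mod_cast hp.ne_zero
  rcases T.eq_empty_or_nonempty with rfl | ⟨⟨η₀, V₀⟩, h₀⟩
  · simp
  obtain ⟨hV₀, hV₀D, hbox₀, c₀, hc₀, hξ₀⟩ := hT _ h₀
  simp only at hV₀ hV₀D hbox₀ hξ₀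
  set Z : (Fin m → ZMod p) × Matrix (Fin n) (Fin n) ℤ → Matrix (Fin n) (Fin n) ℤ := fun τ =>
    heckeDual p η₀ * V₀ * (τ.2.adjugate * heckeMatrix p τ.1)
  have hdvd : ∀ τ ∈ T, ∀ i j, (p : ℤ) ∣ Z τ i j := fun τ hτ i j => by
    obtain ⟨-, -, -, c, hc, hξ⟩ := hT τ hτ
    refine dvd_heckeDual_mul_apply τ.1 η₀ τ.2 V₀ (c := c₀⁻¹ * c) ?_ i j
    rw [mul_smul, ← hξ, hξ₀, smul_smul, inv_mul_cancel₀ hc₀, one_smul]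
  have hF₀ := heckeFrame_det_ne_zero hN hp.ne_zero η₀ hV₀
  have hg : g.det ≠ 0 := fun h => hbox₀.det_ne_zero hR (by rw [det_mul, h, zero_mul])
  refine Finset.card_le_card_of_injOn (fun τ => (τ.2.det, fun i j => Z τ i j / p)) ?_ ?_
  · intro τ hτ
    obtain ⟨hV, hVD, hbox, -⟩ := hT τ hτ
    have hV' : (τ.2.det : ℝ) ≠ 0 := by exact_mod_cast hV
    have hmul : (g * (heckeFrame N η₀ V₀)⁻¹)⁻¹ * (g * (heckeFrame N τ.1 τ.2)⁻¹)
        = ((p : ℝ) * τ.2.det)⁻¹ • (Z τ).map (Int.cast : ℤ → ℝ) := by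
      rw [← heckeFrame_mul_inv hN hp.ne_zero τ.1 η₀ V₀ hV, Matrix.mul_inv_rev,
        nonsing_inv_nonsing_inv _ hF₀.isUnit, Matrix.mul_assoc, ← Matrix.mul_assoc g⁻¹,
        nonsing_inv_mul _ hg.isUnit, Matrix.one_mul]
    have hle : ∀ i j, |Z τ i j / p| ≤ L := fun i j => by
      have h1 := abs_mul_apply_le (hbox₀.abs_inv_le hR) hbox.1 i j
      obtain ⟨k, hk⟩ := hdvd τ hτ i j
      rw [hmul, Matrix.smul_apply, map_apply, hk, smul_eq_mul] at h1
      rw [Int.cast_mul, Int.cast_natCast,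
        show ((p : ℝ) * τ.2.det)⁻¹ * (p * k) = k / τ.2.det by field_simp,
        abs_div,
        div_le_iff₀ (abs_pos.mpr hV')] at h1
      rw [hk, Int.mul_ediv_cancel_left _ hpz]
      have h2 : |(τ.2.det : ℝ)| ≤ D := by exact_mod_cast hVD
      have hB0 : 0 ≤ B := by positivity
      have h3 : |(k : ℝ)| ≤ D * B := h1.trans (by rw [mul_comm]; gcongr)
      exact_mod_cast h3.trans (Int.le_ceil _)
    simp only [W, Finset.coe_product, Set.mem_prod, Finset.mem_coe, Finset.mem_Icc]
    refine ⟨abs_le.mp hVD, fun i j => (abs_le.mp (hle i j)).1, fun i j => (abs_le.mp (hle i j)).2⟩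
  · intro τ hτ τ' hτ' heq
    obtain ⟨hV, hVD, -⟩ := hT τ hτ
    simp only [Prod.mk.injEq] at heq
    have hZ : Z τ = Z τ' := by
      ext i j
      rw [← Int.mul_ediv_cancel' (hdvd τ hτ i j), ← Int.mul_ediv_cancel' (hdvd τ' hτ' i j),
        congrFun (congrFun heq.2 i) j]
    have h1 : ∀ τ : (Fin m → ZMod p) × Matrix (Fin n) (Fin n) ℤ,
        V₀.adjugate * (heckeMatrix p η₀ * Z τ)
          = ((p : ℤ) * V₀.det) • (τ.2.adjugate * heckeMatrix p τ.1) := fun τ => by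
      simp only [Z]
      rw [Matrix.mul_assoc (heckeDual p η₀), ← Matrix.mul_assoc (heckeMatrix p η₀),
        heckeMatrix_mul_heckeDual, Matrix.smul_mul, Matrix.one_mul, Matrix.mul_smul,
        ← Matrix.mul_assoc, adjugate_mul, Matrix.smul_mul, Matrix.one_mul, smul_smul]
    have h2 := h1 τ
    rw [hZ, h1 τ'] at h2
    have h3 := smul_right_injective _ (mul_ne_zero hpz hV₀) h2
    obtain ⟨h4, h5⟩ := eq_of_adjugate_mul_heckeMatrix_eq hV
      (by have : (τ.2.det.natAbs : ℤ) ≤ D := by rwa [Int.natCast_natAbs]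
          omega) heq.1 h3.symm
    exact Prod.ext h4 h5

end Count

section Avoidance

variable {n m p : ℕ}

/-- The lattice `h ℤ^n` has no nonzero point in `A`. -/
def Avoids (A : Set (Fin n → ℝ)) (h : Matrix (Fin n) (Fin n) ℝ) : Prop :=
  ∀ x : Fin n → ℤ, x ≠ 0 → (h *ᵥ fun i => (x i : ℝ)) ∉ A

/-- The sublattice of `g ℤ^n` orthogonal to `ξ` modulo `p`, scaled by `N⁻¹`, has no nonzero point
in `A`. -/
def AvoidsMod (A : Set (Fin n → ℝ)) (N : ℕ) (g : Matrix (Fin n) (Fin n) ℝ)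
    (ξ : Fin n → ZMod p) : Prop :=
  ∀ x : Fin n → ℤ, x ≠ 0 → ξ ⬝ᵥ (fun i => (x i : ZMod p)) = 0 →
    (N : ℝ)⁻¹ • (g *ᵥ fun i => (x i : ℝ)) ∉ A

lemma mulVec_intCast (B : Matrix (Fin n) (Fin n) ℤ) (x : Fin n → ℤ) :
    B.map (Int.cast : ℤ → ℝ) *ᵥ (fun i => (x i : ℝ)) = fun i => ((B *ᵥ x) i : ℝ) := by
  ext i; simp [mulVec, dotProduct]

lemma Avoids.avoidsMod [Fact p.Prime] {A : Set (Fin (m + 1) → ℝ)}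
    {h : Matrix (Fin (m + 1)) (Fin (m + 1)) ℝ} (hh : Avoids A h) {N : ℕ} (hN : N ≠ 0)
    (η : Fin m → ZMod p) {V : Matrix (Fin (m + 1)) (Fin (m + 1)) ℤ} (hV : V.det ≠ 0) :
    AvoidsMod A N (h * heckeFrame N η V) fun i => (V 0 i : ZMod p) := by
  intro x hx hξ
  have hp : (p : ℝ) ≠ 0 := by exact_mod_cast (Fact.out : p.Prime).ne_zero
  have hpz : (p : ℤ) ≠ 0 := by exact_mod_cast (Fact.out : p.Prime).ne_zero
  have hN' : (N : ℝ) ≠ 0 := by exact_mod_cast hN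
  have h0 : (p : ℤ) ∣ (V *ᵥ x) 0 := by
    rw [← ZMod.intCast_zmod_eq_zero_iff_dvd]
    simpa [mulVec, dotProduct] using hξ
  have hdvd : ∀ i, ∃ k : ℤ, (heckeDual p η *ᵥ (V *ᵥ x)) i = p * k := fun i => by
    refine Fin.cases ?_ (fun j => ?_) i
    · rwa [heckeDual_mulVec_zero]
    · rw [heckeDual_mulVec_succ]
      exact dvd_add (h0.mul_left _) (dvd_mul_right _ _)
  choose y hy using hdvd
  have hy' : (heckeDual p η * V) *ᵥ x = (p : ℤ) • y := by
    rw [← mulVec_mulVec]; exact funext hy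
  have hy0 : y ≠ 0 := fun h0 => by
    rw [h0, smul_zero] at hy'
    have : (heckeDual p η * V).det ≠ 0 := by
      rw [det_mul, det_heckeDual]; exact mul_ne_zero (pow_ne_zero _ hpz) hV
    exact hx (Matrix.eq_zero_of_mulVec_eq_zero this hy')
  have : (N : ℝ)⁻¹ • ((h * heckeFrame N η V) *ᵥ fun i => (x i : ℝ))
      = h *ᵥ fun i => (y i : ℝ) := by
    rw [← mulVec_mulVec, heckeFrame, smul_mulVec, mulVec_intCast, hy', mulVec_smul, smul_smul,
      inv_mul_eq_div, div_div_cancel_left' hN']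
    have : (fun i => (((p : ℤ) • y) i : ℝ)) = (p : ℝ) • fun i => (y i : ℝ) := by
      ext i; simp
    rw [this, mulVec_smul, smul_smul, inv_mul_cancel₀ hp, one_smul]
  rw [this]
  exact hh y hy0

lemma AvoidsMod.smul [Fact p.Prime] {A : Set (Fin n → ℝ)} {N : ℕ}
    {g : Matrix (Fin n) (Fin n) ℝ} {ξ : Fin n → ZMod p} (h : AvoidsMod A N g ξ) {c : ZMod p}
    (hc : c ≠ 0) : AvoidsMod A N g (c • ξ) := fun x hx hξ => by
  rw [smul_dotProduct, smul_eq_mul] at hξ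
  exact h x hx ((mul_eq_zero.mp hξ).resolve_left hc)

lemma row_zmod_ne_zero [NeZero n] {V : Matrix (Fin n) (Fin n) ℤ}
    (hV : V.det ≠ 0) (hVp : V.det.natAbs < p) : (fun i => (V 0 i : ZMod p)) ≠ 0 := fun h => by
  have h1 : ((V.det : ℤ) : ZMod p) = 0 := by
    rw [Int.cast_det]
    exact Matrix.det_eq_zero_of_row_eq_zero 0 fun j => congrFun h j
  rw [ZMod.intCast_zmod_eq_zero_iff_dvd] at h1
  have h2 := Int.natAbs_dvd_natAbs.mpr h1
  rw [Int.natAbs_natCast] at h2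
  have := Nat.le_of_dvd (Int.natAbs_pos.mpr hV) h2
  omega

open Classical in
lemma exists_card_hecke_le (m D : ℕ) {R : ℝ} (hR : 1 ≤ R) :
    ∃ C₁ : ℕ, ∀ (N p : ℕ) [Fact p.Prime], N ≠ 0 → D < p →
      ∀ (A : Set (Fin (m + 1) → ℝ)) (g : Matrix (Fin (m + 1)) (Fin (m + 1)) ℝ)
        (T : Finset ((Fin m → ZMod p) × Matrix (Fin (m + 1)) (Fin (m + 1)) ℤ)),
      (∀ τ ∈ T, τ.2.det ≠ 0 ∧ |τ.2.det| ≤ D ∧ InBox R (g * (heckeFrame N τ.1 τ.2)⁻¹) ∧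
        AvoidsMod A N g fun i => (τ.2 0 i : ZMod p)) →
      T.card * (p - 1) ≤
        (Finset.univ.filter fun ξ : Fin (m + 1) → ZMod p => AvoidsMod A N g ξ).card * C₁ := by
  obtain ⟨C₁, hC₁⟩ := exists_card_collinear_le m D hR
  refine ⟨C₁, fun N p _ hN hDp A g T hT => ?_⟩
  refine Finset.card_mul_le_card_mul
    (fun τ ξ => ∃ c : ZMod p, c ≠ 0 ∧ ξ = c • fun i => (τ.2 0 i : ZMod p)) ?_ ?_
  · intro τ hτ
    obtain ⟨hV, hVD, -, hav⟩ := hT τ hτ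
    have hξ := row_zmod_ne_zero (p := p) hV
      (by have : (τ.2.det.natAbs : ℤ) ≤ D := by rwa [Int.natCast_natAbs]
          omega)
    have hcard : (Finset.univ.erase (0 : ZMod p)).card = p - 1 := by
      rw [Finset.card_erase_of_mem (Finset.mem_univ _), Finset.card_univ, ZMod.card]
    rw [← hcard]
    refine Finset.card_le_card_of_injOn (fun c => c • fun i => (τ.2 0 i : ZMod p)) ?_ ?_
    · intro c hc
      have hc0 : c ≠ 0 := Finset.ne_of_mem_erase hc
      simp only [Finset.mem_coe, Finset.mem_bipartiteAbove, Finset.mem_filter, Finset.mem_univ,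
        true_and]
      exact ⟨hav.smul hc0, c, hc0, rfl⟩
    · intro c _ c' _ h
      exact smul_left_injective _ hξ h
  · intro ξ _
    refine hC₁ N p hN Fact.out hDp g ξ _ fun τ hτ => ?_
    obtain ⟨hτT, hr⟩ := (Finset.mem_bipartiteBelow _).mp hτ
    obtain ⟨h1, h2, h3, -⟩ := hT τ hτT
    exact ⟨h1, h2, h3, hr⟩

/-- Right multiplication by a matrix, as a linear map on arrays. -/
noncomputable def rightMul (F : Matrix (Fin n) (Fin n) ℝ) :
    (Fin n → Fin n → ℝ) →ₗ[ℝ] (Fin n → Fin n → ℝ) :=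
  LinearMap.pi fun i => Matrix.toLin' Fᵀ ∘ₗ LinearMap.proj i

lemma rightMul_apply (F : Matrix (Fin n) (Fin n) ℝ) (h : Fin n → Fin n → ℝ) :
    Matrix.of (rightMul F h) = Matrix.of h * F := by
  ext i j
  simp only [rightMul, mulVec_transpose, Matrix.mul_apply_eq_vecMul, LinearMap.pi_apply,
    LinearMap.comp_apply, LinearMap.proj_apply, Matrix.toLin'_apply, Matrix.of_apply]
  rfl

lemma volume_rightMul_preimage {F : Matrix (Fin n) (Fin n) ℝ} (hF : F.det ≠ 0)
    (W : Set (Fin n → Fin n → ℝ)) :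
    volume (rightMul F ⁻¹' W) = ENNReal.ofReal (|F.det| ^ n)⁻¹ * volume W := by
  have hdet : LinearMap.det (rightMul F) = F.det ^ n := by
    rw [rightMul, LinearMap.det_pi]
    simp
  rw [Measure.addHaar_preimage_linearMap _ (by rw [hdet]; exact pow_ne_zero _ hF), hdet, abs_inv,
    abs_pow]

lemma isClosed_inBox (R : ℝ) :
    IsClosed {h : Fin n → Fin n → ℝ | InBox R (Matrix.of h)} := by
  have hc : Continuous fun h : Fin n → Fin n → ℝ => (Matrix.of h).det :=
    Continuous.matrix_det continuous_id
  have h1 : IsClosed {h : Fin n → Fin n → ℝ | ∀ i j, |h i j| ≤ R} := by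
    simp only [Set.ofPred_forall]
    exact isClosed_iInter fun i => isClosed_iInter fun j =>
      isClosed_le ((continuous_apply_apply i j).abs) continuous_const
  exact h1.inter (isClosed_le continuous_const hc.abs)

lemma continuous_of_mulVec (v : Fin n → ℝ) :
    Continuous fun h : Fin n → Fin n → ℝ => Matrix.of h *ᵥ v :=
  Continuous.matrix_mulVec continuous_id continuous_const

lemma isClosed_avoidsMod {A : Set (Fin n → ℝ)} (hA : IsOpen A) (N : ℕ) (ξ : Fin n → ZMod p) :
    IsClosed {h : Fin n → Fin n → ℝ | AvoidsMod A N (Matrix.of h) ξ} := by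
  simp only [AvoidsMod, Set.ofPred_forall]
  exact isClosed_iInter fun x => isClosed_iInter fun _ => isClosed_iInter fun _ =>
    hA.isClosed_compl.preimage
      ((continuous_const_smul ((N : ℝ)⁻¹)).comp (continuous_of_mulVec fun i => (x i : ℝ)))

end Avoidance

section Averaging

variable {n m p : ℕ}

open Classical in
/-- The proportion of vectors modulo `p` whose orthogonal sublattice avoids `A`. -/
noncomputable def avoidRatio (p N : ℕ) [NeZero p] (A : Set (Fin n → ℝ))
    (g : Matrix (Fin n) (Fin n) ℝ) : ENNReal :=
  ((Finset.univ.filter fun ξ : Fin n → ZMod p => AvoidsMod A N g ξ).card : ENNReal) /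
    (p : ENNReal) ^ n

lemma card_tight_ge [Fact p.Prime] (N : ℕ) (hN : 1 ≤ N) (hp : p ≤ 2 * N ^ (m + 1))
    [DecidablePred fun η : Fin m → ZMod p => ∃ y : Fin (m + 1) → ℤ, y ≠ 0 ∧
      ∀ i, 12 * N * |(heckeDual p η *ᵥ y) i| < p] :
    p ^ m ≤ 2 * (Finset.univ.filter fun η : Fin m → ZMod p => ¬ ∃ y : Fin (m + 1) → ℤ, y ≠ 0 ∧
      ∀ i, 12 * N * |(heckeDual p η *ᵥ y) i| < p).card := by
  have h1 := two_mul_card_short_le (m := m) N hN hp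
  have h2 := Finset.card_filter_add_card_filter_not (s := (Finset.univ : Finset (Fin m → ZMod p)))
    (fun η : Fin m → ZMod p => ∃ y : Fin (m + 1) → ℤ, y ≠ 0 ∧
      ∀ i, 12 * N * |(heckeDual p η *ᵥ y) i| < p)
  rw [Finset.card_univ, Fintype.card_fun, ZMod.card, Fintype.card_fin] at h2
  have h3 : (Finset.univ.filter fun η : Fin m → ZMod p => ∃ y : Fin (m + 1) → ℤ, y ≠ 0 ∧
      ∀ i, 12 * N * |(heckeDual p η *ᵥ y) i| < p).card * 2 ≤ p ^ m := by
    rw [mul_comm]; convert h1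
  omega

lemma exists_volume_avoids_le (hm : 1 ≤ m) {R : ℝ} (hR : 1 ≤ R) :
    ∃ R' : ℝ, 1 ≤ R' ∧ ∃ C D : ℕ, ∀ (N p : ℕ) [Fact p.Prime], 1 ≤ N → N ^ (m + 1) ≤ p →
      p ≤ 2 * N ^ (m + 1) → D < p → ∀ A : Set (Fin (m + 1) → ℝ), IsOpen A →
      volume {h : Fin (m + 1) → Fin (m + 1) → ℝ |
          InBox R (Matrix.of h) ∧ Avoids A (Matrix.of h)} ≤
        C * ∫⁻ g in {g : Fin (m + 1) → Fin (m + 1) → ℝ | InBox R' (Matrix.of g)},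
          avoidRatio p N A (Matrix.of g) := by
  classical
  obtain ⟨R', hR', D, hD⟩ := exists_inBox_mul_heckeFrame hm hR
  obtain ⟨C₁, hC₁⟩ := exists_card_hecke_le m D hR
  refine ⟨R', hR', 4 * 2 ^ (m + 1) * C₁, D, fun N p _ hN hp1 hp2 hDp A hA => ?_⟩
  have hp0 : p ≠ 0 := (Fact.out : p.Prime).ne_zero
  have hpe0 : (p : ENNReal) ≠ 0 := by exact_mod_cast hp0
  have hpm0 : (p : ENNReal) ^ m ≠ 0 := pow_ne_zero _ hpe0
  have hpmt : (p : ENNReal) ^ m ≠ ⊤ := ENNReal.pow_ne_top (ENNReal.natCast_ne_top p)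
  have hN0 : N ≠ 0 := by omega
  set K : Set (Fin (m + 1) → Fin (m + 1) → ℝ) :=
    {h | InBox R (Matrix.of h) ∧ Avoids A (Matrix.of h)}
  set K' : Set (Fin (m + 1) → Fin (m + 1) → ℝ) := {g | InBox R' (Matrix.of g)}
  have : Countable (Matrix (Fin (m + 1)) (Fin (m + 1)) ℤ) :=
    inferInstanceAs (Countable (Fin (m + 1) → Fin (m + 1) → ℤ))
  let E : (Fin m → ZMod p) → Matrix (Fin (m + 1)) (Fin (m + 1)) ℤ →
      Set (Fin (m + 1) → Fin (m + 1) → ℝ) := fun η V =>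
    {h | h ∈ K ∧ V.det ≠ 0 ∧ |V.det| ≤ D ∧ InBox R' (Matrix.of h * heckeFrame N η V)}
  let W : (Fin m → ZMod p) × Matrix (Fin (m + 1)) (Fin (m + 1)) ℤ →
      Set (Fin (m + 1) → Fin (m + 1) → ℝ) := fun τ =>
    {g | (τ.2.det ≠ 0 ∧ |τ.2.det| ≤ D) ∧ InBox R' (Matrix.of g) ∧
      InBox R (Matrix.of g * (heckeFrame N τ.1 τ.2)⁻¹) ∧
      AvoidsMod A N (Matrix.of g) fun i => (τ.2 0 i : ZMod p)}
  have hWmeas : ∀ τ, MeasurableSet (W τ) := fun τ => by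
    refine MeasurableSet.inter (MeasurableSet.const _) (MeasurableSet.inter
      (isClosed_inBox R').measurableSet (MeasurableSet.inter ?_
      (isClosed_avoidsMod hA N _).measurableSet))
    have hc : Continuous (rightMul (heckeFrame N τ.1 τ.2)⁻¹) :=
      LinearMap.continuous_of_finiteDimensional _
    have h1 := ((isClosed_inBox R).preimage hc).measurableSet
    have h2 : rightMul (heckeFrame N τ.1 τ.2)⁻¹ ⁻¹' {h | InBox R (Matrix.of h)}
        = {g | InBox R (Matrix.of g * (heckeFrame N τ.1 τ.2)⁻¹)} := by
      ext g
      simp only [Set.mem_preimage, Set.mem_ofPred_eq, rightMul_apply]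
    rwa [h2] at h1
  have hEW : ∀ η V, volume (E η V) ≤ 2 ^ (m + 1) * volume (W (η, V)) := fun η V => by
    by_cases hV : V.det ≠ 0
    · have hF := heckeFrame_det_ne_zero hN0 hp0 η hV
      have hsub : E η V ⊆ rightMul (heckeFrame N η V) ⁻¹' W (η, V) := by
        rintro h ⟨⟨h1, h2⟩, h3, h4, h5⟩
        refine ⟨⟨h3, h4⟩, ?_, ?_, ?_⟩
        · rwa [rightMul_apply]
        · rwa [rightMul_apply, Matrix.mul_assoc, mul_nonsing_inv _ hF.isUnit, Matrix.mul_one]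
        · rw [rightMul_apply]
          exact h2.avoidsMod hN0 η hV
      refine (measure_mono hsub).trans ?_
      rw [volume_rightMul_preimage hF]
      gcongr
      rw [show (2 : ENNReal) ^ (m + 1) = ENNReal.ofReal (2 ^ (m + 1)) by
        rw [ENNReal.ofReal_pow (by norm_num)]; simp]
      refine ENNReal.ofReal_le_ofReal ?_
      rw [← inv_pow]
      refine pow_le_pow_left₀ (by positivity) ?_ _
      refine inv_le_of_inv_le₀ (by norm_num) ?_
      have hpr : (0 : ℝ) < p := by positivity
      have hp2' : (p : ℝ) ≤ 2 * N ^ (m + 1) := by exact_mod_cast hp2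
      have hV1 : (1 : ℝ) ≤ |(V.det : ℝ)| := by exact_mod_cast Int.one_le_abs hV
      have h1 : (2 : ℝ)⁻¹ ≤ N ^ (m + 1) / p := by rw [le_div_iff₀ hpr]; linarith
      rw [det_heckeFrame hp0, abs_mul, abs_of_nonneg (by positivity : (0 : ℝ) ≤ N ^ (m + 1) / p)]
      calc (2 : ℝ)⁻¹ = 2⁻¹ * 1 := (mul_one _).symm
        _ ≤ _ := by gcongr
    · have : E η V = ∅ := Set.eq_empty_of_forall_notMem fun h hh => hV hh.2.1
      simp [this]
  set tight : Finset (Fin m → ZMod p) := Finset.univ.filter fun η : Fin m → ZMod p =>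
    ¬ ∃ y : Fin (m + 1) → ℤ, y ≠ 0 ∧ ∀ i, 12 * N * |(heckeDual p η *ᵥ y) i| < p with htight
  have hcover : ∀ η ∈ tight, volume K ≤ ∑' V, volume (E η V) := fun η hη => by
    refine (measure_mono fun h hh => ?_).trans (measure_iUnion_le _)
    obtain ⟨V, h1, h2, h3⟩ := hD (Matrix.of h) hh.1 N p hN hp1 hp2 η (Finset.mem_filter.mp hη).2
    exact Set.mem_iUnion.mpr ⟨V, hh, h1, h2, h3⟩
  have hlow : (p : ENNReal) ^ m * volume K ≤ 2 * (2 ^ (m + 1) * ∑' τ, volume (W τ)) := by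
    have h1 : (p : ENNReal) ^ m ≤ 2 * (tight.card : ENNReal) := by
      exact_mod_cast card_tight_ge (m := m) N hN hp2
    calc (p : ENNReal) ^ m * volume K ≤ 2 * (tight.card * volume K) := by
          rw [← mul_assoc]; gcongr
      _ = 2 * ∑ η ∈ tight, volume K := by rw [Finset.sum_const, nsmul_eq_mul]
      _ ≤ 2 * ∑ η ∈ tight, ∑' V, volume (E η V) := by
          gcongr with η hη; exact hcover η hη
      _ ≤ 2 * ∑ η, ∑' V, volume (E η V) := by
          gcongr; exact Finset.subset_univ _
      _ ≤ 2 * ∑ η, ∑' V, 2 ^ (m + 1) * volume (W (η, V)) := by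
          gcongr with η _ V; exact hEW η V
      _ = 2 * (2 ^ (m + 1) * ∑' τ, volume (W τ)) := by
          rw [ENNReal.tsum_prod', tsum_fintype, Finset.mul_sum]
          simp only [ENNReal.tsum_mul_left, Finset.mul_sum]
  have hpt : ∀ g : Fin (m + 1) → Fin (m + 1) → ℝ, ∑' τ, (W τ).indicator (fun _ => (1 : ENNReal)) g ≤
      K'.indicator (fun g => 2 * C₁ * p ^ m * avoidRatio p N A (Matrix.of g)) g := fun g => by
    rw [ENNReal.tsum_eq_iSup_sum]
    refine iSup_le fun s => ?_
    have hsum : ∑ τ ∈ s, (W τ).indicator (fun _ => (1 : ENNReal)) g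
        = ((s.filter fun τ => g ∈ W τ).card : ENNReal) := by
      rw [Finset.card_filter]
      simp only [Set.indicator_apply]
      push_cast
      rfl
    rw [hsum]
    by_cases hg : g ∈ K'
    · rw [Set.indicator_of_mem hg]
      have h1 := hC₁ N p hN0 hDp A (Matrix.of g) (s.filter fun τ => g ∈ W τ) fun τ hτ => by
        obtain ⟨⟨h1, h2⟩, -, h3, h4⟩ := (Finset.mem_filter.mp hτ).2
        exact ⟨h1, h2, h3, h4⟩
      set b := (Finset.univ.filter fun ξ : Fin (m + 1) → ZMod p =>
        AvoidsMod A N (Matrix.of g) ξ).card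
        with hb
      set a := (s.filter fun τ => g ∈ W τ).card
      have h2 : a * p ≤ 2 * C₁ * b := by
        have : p ≤ 2 * (p - 1) := by have := (Fact.out : p.Prime).two_le; omega
        calc a * p ≤ a * (2 * (p - 1)) := Nat.mul_le_mul_left _ this
          _ = 2 * (a * (p - 1)) := by ring
          _ ≤ 2 * (b * C₁) := Nat.mul_le_mul_left _ h1
          _ = _ := by ring
      have h3 : (a : ENNReal) * p ≤ 2 * C₁ * b := by exact_mod_cast h2
      have h4 : (2 * C₁ * p ^ m * avoidRatio p N A (Matrix.of g) : ENNReal) = 2 * C₁ * b / p := by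
        have : avoidRatio p N A (Matrix.of g) = (b : ENNReal) / p ^ (m + 1) := rfl
        rw [this, pow_succ, ENNReal.div_eq_inv_mul, ENNReal.mul_inv (Or.inl hpm0) (Or.inl hpmt),
          ENNReal.div_eq_inv_mul]
        calc (2 * C₁ * p ^ m * (((p : ENNReal) ^ m)⁻¹ * (p : ENNReal)⁻¹ * b) : ENNReal)
            = ((p : ENNReal) ^ m * ((p : ENNReal) ^ m)⁻¹) * ((p : ENNReal)⁻¹ * (2 * C₁ * b)) := by
              ring
          _ = _ := by rw [ENNReal.mul_inv_cancel hpm0 hpmt, one_mul]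
      rw [h4]
      exact (ENNReal.le_div_iff_mul_le (Or.inl hpe0) (Or.inl (ENNReal.natCast_ne_top p))).mpr h3
    · rw [Set.indicator_of_notMem hg, Finset.filter_false_of_mem fun τ _ h => hg h.2.1]
      simp
  have hup : ∑' τ, volume (W τ) ≤
      2 * C₁ * p ^ m * ∫⁻ g in K', avoidRatio p N A (Matrix.of g) := by
    calc ∑' τ, volume (W τ)
        = ∑' τ, ∫⁻ g, (W τ).indicator (fun _ => (1 : ENNReal)) g := by
          simp only [lintegral_indicator_const (hWmeas _), one_mul]
      _ = ∫⁻ g, ∑' τ, (W τ).indicator (fun _ => (1 : ENNReal)) g :=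
          (lintegral_tsum fun τ => (measurable_const.indicator (hWmeas τ)).aemeasurable).symm
      _ ≤ ∫⁻ g, K'.indicator (fun g => 2 * C₁ * p ^ m * avoidRatio p N A (Matrix.of g)) g :=
          lintegral_mono hpt
      _ = _ := by
          rw [lintegral_indicator (isClosed_inBox R').measurableSet,
            lintegral_const_mul' _ _ (by finiteness)]
  have hfin := hlow.trans (mul_le_mul_right (mul_le_mul_right hup (2 ^ (m + 1))) 2)
  refine (ENNReal.mul_le_mul_iff_right hpm0 hpmt).mp (hfin.trans (le_of_eq ?_))
  push_cast
  ring

end Averaging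

section LatticePoints

variable {n : ℕ}

/-- Integer points in the dilate `N • s`. -/
def scaledPts (s : Set (Fin n → ℝ)) (N : ℕ) : Set (Fin n → ℤ) :=
  {z | (N : ℝ)⁻¹ • (fun i => (z i : ℝ)) ∈ s}

/-- Integer vectors without a common divisor. -/
def IsPrimitiveVec (z : Fin n → ℤ) : Prop := ∀ a : ℕ, 2 ≤ a → ∀ w : Fin n → ℤ, z ≠ (a : ℤ) • w

lemma IsPrimitiveVec.ne_zero {z : Fin n → ℤ} (hz : IsPrimitiveVec z) : z ≠ 0 := fun h =>
  hz 2 le_rfl 0 (by rw [h, smul_zero])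

lemma IsPrimitiveVec.exists_sum_eq_one {z : Fin n → ℤ} (hz : IsPrimitiveVec z) :
    ∃ u : Fin n → ℤ, ∑ i, u i * z i = 1 := by
  set I := Ideal.span (Set.range z)
  obtain ⟨d, hd⟩ := (IsPrincipalIdealRing.principal I).principal
  have hdvd : ∀ i, d ∣ z i := fun i => by
    rw [← Ideal.mem_span_singleton]
    have : z i ∈ I := Ideal.subset_span ⟨i, rfl⟩
    rw [hd] at this
    exact this
  choose w hw using hdvd
  have hd1 : d.natAbs = 1 := by
    by_contra hne
    rcases Nat.lt_or_ge d.natAbs 2 with h | h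
    · have : d = 0 := by omega
      exact hz.ne_zero (funext fun i => by rw [hw, this]; simp)
    · rcases Int.natAbs_eq d with h' | h'
      · exact hz _ h w (funext fun i => by rw [hw i, ← h']; rfl)
      · refine hz _ h (-w) (funext fun i => ?_)
        rw [hw i]
        simp only [Pi.smul_apply, Pi.neg_apply, smul_eq_mul]
        rw [mul_neg, ← neg_mul, ← h']
  have h1 : (1 : ℤ) ∈ I := by
    rw [hd]
    change (1 : ℤ) ∈ Ideal.span {d}
    rw [Ideal.mem_span_singleton]
    exact (Int.isUnit_iff_natAbs_eq.mpr hd1).dvd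
  obtain ⟨c, hc⟩ := Ideal.mem_span_range_iff_exists_fun.mp h1
  exact ⟨c, hc⟩

lemma IsPrimitiveVec.eq_or_eq_neg {x y : Fin n → ℤ} (hx : IsPrimitiveVec x)
    (hy : IsPrimitiveVec y) (h : ∀ i j, x i * y j = x j * y i) : y = x ∨ y = -x := by
  obtain ⟨u, hu⟩ := hx.exists_sum_eq_one
  set k := ∑ i, u i * y i
  have hyk : y = k • x := funext fun j => by
    calc y j = (∑ i, u i * x i) * y j := by rw [hu, one_mul]
      _ = ∑ i, u i * (x i * y j) := by rw [Finset.sum_mul]; simp only [mul_assoc]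
      _ = ∑ i, u i * y i * x j := Finset.sum_congr rfl fun i _ => by rw [h]; ring
      _ = k * x j := by rw [Finset.sum_mul]
  have hk1 : k.natAbs = 1 := by
    by_contra hne
    rcases Nat.lt_or_ge k.natAbs 2 with h | h
    · have : k = 0 := by omega
      exact hy.ne_zero (by rw [hyk, this, zero_smul])
    · rcases Int.natAbs_eq k with h' | h'
      · exact hy _ h x (by rw [← h']; exact hyk)
      · exact hy _ h (-x) (by rw [smul_neg, ← neg_smul, ← h']; exact hyk)
  rcases Int.natAbs_eq_iff.mp hk1 with h' | h'
  · left; rw [hyk, h']; simp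
  · right; rw [hyk, h']; simp

lemma finite_scaledPts {s : Set (Fin n → ℝ)} {ρ : ℝ} (hs : ∀ x ∈ s, ∀ i, |x i| ≤ ρ) {N : ℕ}
    (hN : N ≠ 0) : (scaledPts s N).Finite ∧
      ((scaledPts s N).ncard : ℝ) ≤ (2 * (ρ * N) + 1) ^ n ⊔ 0 ∧
      ∀ z ∈ scaledPts s N, ∀ i, |(z i : ℝ)| ≤ ρ * N := by
  have hN' : (0 : ℝ) < N := by positivity
  have hb : ∀ z ∈ scaledPts s N, ∀ i, |(z i : ℝ)| ≤ ρ * N := fun z hz i => by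
    have := hs _ hz i
    rw [Pi.smul_apply, smul_eq_mul, abs_mul, abs_of_pos (by positivity), inv_mul_eq_div,
      div_le_iff₀ hN'] at this
    exact this
  set b := ⌊ρ * N⌋
  have hsub : scaledPts s N ⊆ (Fintype.piFinset fun _ : Fin n => Finset.Icc (-b) b) :=
    fun z hz => by
      rw [Finset.mem_coe, Fintype.mem_piFinset]
      intro i
      rw [Finset.mem_Icc, ← abs_le, Int.le_floor]
      exact_mod_cast hb z hz i
  refine ⟨(Finset.finite_toSet _).subset hsub, ?_, hb⟩
  rcases (scaledPts s N).eq_empty_or_nonempty with h | ⟨z, hz⟩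
  · rw [h]; simp
  refine le_sup_of_le_left ?_
  have h1 := Set.ncard_le_ncard hsub (Finset.finite_toSet _)
  rw [Set.ncard_coe_finset, Fintype.card_piFinset, Finset.prod_const, Finset.card_univ,
    Fintype.card_fin, Int.card_Icc] at h1
  rcases Nat.eq_zero_or_pos n with rfl | hn
  · simpa using h1
  have hρ : 0 ≤ ρ * N := (abs_nonneg _).trans (hb z hz ⟨0, hn⟩)
  have hb0 : 0 ≤ b := Int.floor_nonneg.mpr hρ
  have h2 : (((b + 1 - -b).toNat : ℕ) : ℝ) ≤ 2 * (ρ * N) + 1 := by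
    have : (((b + 1 - -b).toNat : ℤ) : ℝ) = ((b + 1 - -b : ℤ) : ℝ) := by
      rw [Int.toNat_of_nonneg (by omega)]
    have h3 : (b : ℝ) ≤ ρ * N := Int.floor_le _
    rw [Int.cast_natCast] at this
    rw [this]; push_cast; linarith
  calc ((scaledPts s N).ncard : ℝ) ≤ (((b + 1 - -b).toNat ^ n : ℕ) : ℝ) := by exact_mod_cast h1
    _ ≤ _ := by push_cast; gcongr

lemma tendsto_ncard_scaledPts {s : Set (Fin n → ℝ)} (hs : Bornology.IsBounded s)
    (hm : MeasurableSet s) (hf : volume (frontier s) = 0) :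
    Tendsto (fun N : ℕ => ((scaledPts s N).ncard : ℝ) / N ^ n) atTop (nhds (volume.real s)) := by
  have h := tendsto_card_div_pow_atTop_volume s hs hm hf
  rw [Fintype.card_fin] at h
  refine h.congr' ?_
  filter_upwards [eventually_ge_atTop 1] with N hN
  have hN' : (N : ℝ) ≠ 0 := by positivity
  congr 2
  have hinj : Function.Injective fun z : Fin n → ℤ => (N : ℝ)⁻¹ • (fun i => (z i : ℝ)) :=
    fun z w hzw => by
      have := smul_right_injective (Fin n → ℝ) (inv_ne_zero hN') hzw
      exact funext fun i => by exact_mod_cast congrFun this i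
  rw [← Set.ncard_image_of_injective _ hinj, Nat.card_coe_set_eq]
  congr 1
  ext v
  constructor
  · rintro ⟨h1, w, h2, rfl⟩
    have hmem : ∀ i, ∃ z : ℤ, (z : ℝ) = w i := by
      have := ((Pi.basisFun ℝ (Fin n)).mem_span_iff_repr_mem ℤ _).mp h2
      simpa using this
    choose z hz using hmem
    have hzw : (fun i => (z i : ℝ)) = w := funext hz
    refine ⟨z, ?_, ?_⟩
    · change (N : ℝ)⁻¹ • (fun i => (z i : ℝ)) ∈ s
      rw [hzw]; exact h1
    · simp only [hzw]
  · rintro ⟨z, hz, rfl⟩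
    refine ⟨hz, _, ?_, rfl⟩
    refine ((Pi.basisFun ℝ (Fin n)).mem_span_iff_repr_mem ℤ _).mpr fun i => ⟨z i, by simp⟩

lemma tsum_inv_sq_le : ∑' a : ℕ, (1 : ℝ) / ((a + 2 : ℕ) : ℝ) ^ 2 ≤ 2 / 3 := by
  have h := hasSum_zeta_two
  have h1 := h.summable.sum_add_tsum_nat_add 2
  rw [h.tsum_eq] at h1
  simp only [Finset.sum_range_succ, Finset.sum_range_zero] at h1
  have h2 : Real.pi < 3.15 := Real.pi_lt_d2
  have h3 := Real.pi_pos
  norm_num at h1 ⊢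
  nlinarith

/-- A positive proportion of the integer points of a dilate are primitive. -/
lemma eventually_le_ncard_primitive (hn : 3 ≤ n) {s : Set (Fin n → ℝ)}
    (hs : Bornology.IsBounded s) (hm : MeasurableSet s) (hf : volume (frontier s) = 0)
    (h0 : (0 : Fin n → ℝ) ∉ s) (hv : 0 < volume.real s) :
    ∀ᶠ N : ℕ in atTop, (N : ℝ) ^ n * (volume.real s / 4) ≤
      ({z | z ∈ scaledPts s N ∧ IsPrimitiveVec z}.ncard : ℝ) := by
  obtain ⟨ρ, hρ0, hρ⟩ : ∃ ρ : ℝ, 0 < ρ ∧ ∀ x ∈ s, ∀ i, |x i| ≤ ρ := by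
    obtain ⟨ρ, hρ⟩ := hs.exists_norm_le
    exact ⟨max ρ 1, by positivity, fun x hx i =>
      (norm_le_pi_norm x i).trans ((hρ x hx).trans (le_max_left _ _))⟩
  set v := volume.real s
  let sa : ℕ → Set (Fin n → ℝ) := fun a => (fun x => ((a + 2 : ℕ) : ℝ) • x) ⁻¹' s
  have hapos : ∀ a : ℕ, (0 : ℝ) < ((a + 2 : ℕ) : ℝ) := fun a => by positivity
  have hsaρ : ∀ a, ∀ x ∈ sa a, ∀ i, |x i| ≤ ρ / ((a + 2 : ℕ) : ℝ) := fun a x hx i => by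
    have : |(((a + 2 : ℕ) : ℝ) • x) i| ≤ ρ := hρ _ hx i
    rw [Pi.smul_apply, smul_eq_mul, abs_mul, abs_of_pos (hapos a)] at this
    rw [le_div_iff₀ (hapos a)]; linarith
  have hsab : ∀ a, Bornology.IsBounded (sa a) := fun a => by
    refine isBounded_iff_forall_norm_le.mpr ⟨ρ / ((a + 2 : ℕ) : ℝ), fun x hx => ?_⟩
    exact (pi_norm_le_iff_of_nonneg (div_nonneg hρ0.le (hapos a).le)).mpr (hsaρ a x hx)
  have hcont : ∀ a : ℕ, Continuous fun x : Fin n → ℝ => ((a + 2 : ℕ) : ℝ) • x := fun a =>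
    continuous_const_smul _
  have hvol : ∀ a (t : Set (Fin n → ℝ)), volume ((fun x => ((a + 2 : ℕ) : ℝ) • x) ⁻¹' t)
      = ENNReal.ofReal ((((a + 2 : ℕ) : ℝ) ^ n)⁻¹) * volume t := fun a t => by
    rw [Measure.addHaar_preimage_smul _ (hapos a).ne', Module.finrank_fin_fun, abs_of_pos]
    have := hapos a
    positivity
  set f : ℕ → ℕ → ℝ := fun N a => ((scaledPts (sa a) N).ncard : ℝ) / N ^ n
  have hlim : ∀ a, Tendsto (fun N => f N a) atTop (nhds ((((a + 2 : ℕ) : ℝ) ^ n)⁻¹ * v)) := by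
    intro a
    have h1 := tendsto_ncard_scaledPts (hsab a) ((hcont a).measurable hm)
      (measure_mono_null ((hcont a).frontier_preimage_subset s) (by rw [hvol, hf, mul_zero]))
    have h2 : volume.real (sa a) = (((a + 2 : ℕ) : ℝ) ^ n)⁻¹ * v := by
      rw [measureReal_def, hvol, ENNReal.toReal_mul, ENNReal.toReal_ofReal (by positivity)]
      rfl
    rwa [h2] at h1
  have hsa0 : ∀ a N, (0 : Fin n → ℤ) ∉ scaledPts (sa a) N := fun a N h => by
    apply h0
    have : ((a + 2 : ℕ) : ℝ) • ((N : ℝ)⁻¹ • (fun i => ((0 : Fin n → ℤ) i : ℝ))) ∈ s := h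
    convert! this using 1
    ext i; simp
  have hinv : ∀ a : ℕ, (((a + 2 : ℕ) : ℝ) ^ n)⁻¹ ≤ 1 / ((a + 2 : ℕ) : ℝ) ^ 2 := fun a => by
    rw [one_div]
    refine inv_anti₀ (pow_pos (hapos a) _) (pow_le_pow_right₀ ?_ (by omega))
    exact_mod_cast (by omega : 1 ≤ a + 2)
  have hsq : Summable fun a : ℕ => 1 / ((a + 2 : ℕ) : ℝ) ^ 2 :=
    (summable_nat_add_iff 2).mpr hasSum_zeta_two.summable
  have hbound : ∀ N : ℕ, N ≠ 0 → ∀ a, f N a ≤ (3 * ρ) ^ n * (1 / ((a + 2 : ℕ) : ℝ) ^ 2) := by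
    intro N hN a
    have hN' : (0 : ℝ) < N := by positivity
    have hR : 0 ≤ (3 * ρ) ^ n * (1 / ((a + 2 : ℕ) : ℝ) ^ 2) := by positivity
    rcases (scaledPts (sa a) N).eq_empty_or_nonempty with h | ⟨z, hz⟩
    · simp only [f, h]; simpa using hR
    obtain ⟨-, h1, h2⟩ := finite_scaledPts (hsaρ a) hN
    set r := ρ / ((a + 2 : ℕ) : ℝ) * N with hr
    have hr0 : 0 ≤ r := by positivity
    have hr1 : 1 ≤ r := by
      have hz0 : z ≠ 0 := fun h => hsa0 a N (h ▸ hz)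
      obtain ⟨i, hi⟩ := Function.ne_iff.mp hz0
      have : (1 : ℝ) ≤ |(z i : ℝ)| := by exact_mod_cast Int.one_le_abs hi
      exact this.trans (h2 z hz i)
    rw [sup_of_le_left (by positivity)] at h1
    simp only [f]
    rw [div_le_iff₀ (by positivity)]
    calc ((scaledPts (sa a) N).ncard : ℝ) ≤ (2 * r + 1) ^ n := h1
      _ ≤ (3 * r) ^ n := by gcongr; linarith
      _ = (3 * ρ) ^ n * (((a + 2 : ℕ) : ℝ) ^ n)⁻¹ * N ^ n := by
          rw [hr, ← inv_pow, ← mul_pow, ← mul_pow]; congr 1; ring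
      _ ≤ _ := by gcongr; exact hinv a
  have htann := tendsto_tsum_of_dominated_convergence (𝓕 := atTop) (f := f)
    (hsq.mul_left ((3 * ρ) ^ n)) hlim (by
      filter_upwards [eventually_ge_atTop 1] with N hN a
      rw [Real.norm_of_nonneg (by positivity)]
      exact hbound N (by omega) a)
  have hlimle : ∑' a : ℕ, (((a + 2 : ℕ) : ℝ) ^ n)⁻¹ * v ≤ 2 / 3 * v := by
    rw [tsum_mul_right]
    gcongr
    refine le_trans (Summable.tsum_le_tsum hinv ?_ hsq) tsum_inv_sq_le
    exact Summable.of_nonneg_of_le (fun a => by positivity) hinv hsq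
  have hev1 := htann.eventually_lt_const (u := 17 / 24 * v) (by linarith)
  have hev2 := (tendsto_ncard_scaledPts hs hm hf).eventually_const_lt (u := 23 / 24 * v)
    (by change _ < v; linarith)
  filter_upwards [hev1, hev2, eventually_ge_atTop 1] with N h1 h2 hN
  have hN0 : N ≠ 0 := by omega
  have hN' : (0 : ℝ) < (N : ℝ) ^ n := by positivity
  obtain ⟨hfin, -, hbd⟩ := finite_scaledPts hρ hN0
  set P := {z | z ∈ scaledPts s N ∧ IsPrimitiveVec z}
  obtain ⟨L, hL⟩ := exists_nat_gt (ρ * N)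
  have hcover : scaledPts s N ⊆ P ∪ ⋃ a ∈ Finset.range L,
      (fun w : Fin n → ℤ => ((a + 2 : ℕ) : ℤ) • w) '' scaledPts (sa a) N := by
    intro z hz
    by_cases hp : IsPrimitiveVec z
    · exact Or.inl ⟨hz, hp⟩
    · right
      unfold IsPrimitiveVec at hp
      push Not at hp
      obtain ⟨a, ha, w, hw⟩ := hp
      obtain ⟨a, rfl⟩ := Nat.exists_eq_add_of_le' ha
      have hwmem : w ∈ scaledPts (sa a) N := by
        change ((a + 2 : ℕ) : ℝ) • ((N : ℝ)⁻¹ • fun i => (w i : ℝ)) ∈ s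
        have hz' : (N : ℝ)⁻¹ • (fun i => (z i : ℝ)) ∈ s := hz
        convert! hz' using 1
        ext i
        rw [hw]
        simp only [Pi.smul_apply, smul_eq_mul]
        push_cast
        ring
      simp only [Set.mem_iUnion]
      refine ⟨a, ?_, w, hwmem, hw.symm⟩
      rw [Finset.mem_range]
      have hw0 : w ≠ 0 := fun h => hsa0 a N (h ▸ hwmem)
      obtain ⟨i, hi⟩ := Function.ne_iff.mp hw0
      have h3 : (1 : ℝ) ≤ |(w i : ℝ)| := by exact_mod_cast Int.one_le_abs hi
      have h4 := hbd z hz i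
      rw [hw] at h4
      simp only [Pi.smul_apply, smul_eq_mul] at h4
      rw [Int.cast_mul, abs_mul] at h4
      have h5 : |(((a + 2 : ℕ) : ℤ) : ℝ)| = a + 2 := by
        rw [Int.cast_natCast, Nat.abs_cast]; push_cast; ring
      rw [h5] at h4
      have : (a : ℝ) < L := by nlinarith [Nat.cast_nonneg (α := ℝ) a]
      exact_mod_cast this
  have hPfin : P.Finite := hfin.subset fun z hz => hz.1
  have hafin : ∀ a, (scaledPts (sa a) N).Finite := fun a => (finite_scaledPts (hsaρ a) hN0).1
  have hcard : ((scaledPts s N).ncard : ℝ) ≤ P.ncard + ∑ a ∈ Finset.range L,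
      ((scaledPts (sa a) N).ncard : ℝ) := by
    have hle : (scaledPts s N).ncard ≤ P.ncard + ∑ a ∈ Finset.range L,
        (scaledPts (sa a) N).ncard := by
      refine (Set.ncard_le_ncard hcover (hPfin.union
        ((Finset.range L).finite_toSet.biUnion fun a _ => (hafin a).image _))).trans ?_
      refine (Set.ncard_union_le _ _).trans ?_
      gcongr
      refine (Finset.set_ncard_biUnion_le _ _).trans (Finset.sum_le_sum fun a _ => ?_)
      exact Set.ncard_image_le (hafin a)
    exact_mod_cast hle
  have hsum : ∑ a ∈ Finset.range L, ((scaledPts (sa a) N).ncard : ℝ) ≤ 17 / 24 * v * N ^ n := by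
    have h3 : ∑ a ∈ Finset.range L, f N a ≤ ∑' a, f N a :=
      Summable.sum_le_tsum _ (fun a _ => by positivity)
        (Summable.of_nonneg_of_le (fun a => by positivity) (hbound N hN0)
          (hsq.mul_left _))
    simp only [f] at h3
    rw [← Finset.sum_div] at h3
    rw [← div_le_iff₀ hN']
    exact h3.trans h1.le
  rw [lt_div_iff₀ hN'] at h2
  nlinarith

end LatticePoints

section Limit

variable {n m p : ℕ}

open Classical in
lemma card_avoidsMod_mul_ncard_le [Fact p.Prime] {N B : ℕ} {A s : Set (Fin n → ℝ)}
    {g : Matrix (Fin n) (Fin n) ℝ} (hsA : ∀ x ∈ s, g *ᵥ x ∈ A) (hN : N ≠ 0)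
    (hB : ∀ x ∈ s, ∀ i, |x i| * N ≤ B) (hp : 2 * B ^ 2 < p) :
    (Finset.univ.filter fun ξ : Fin n → ZMod p => AvoidsMod A N g ξ).card *
      {z | z ∈ scaledPts s N ∧ IsPrimitiveVec z}.ncard ≤ 2 * p * p ^ n := by
  have hN' : (0 : ℝ) < N := by positivity
  set P := {z | z ∈ scaledPts s N ∧ IsPrimitiveVec z}
  have hPB : ∀ z ∈ P, ∀ i, |z i| ≤ B := fun z hz i => by
    have h := hB _ hz.1 i
    rw [Pi.smul_apply, smul_eq_mul, abs_mul, abs_of_pos (by positivity : (0 : ℝ) < (N : ℝ)⁻¹),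
      mul_right_comm, inv_mul_cancel₀ hN'.ne', one_mul] at h
    exact_mod_cast h
  have hPfin : P.Finite := by
    refine (finite_scaledPts (s := s) (ρ := B) (fun x hx i => ?_) hN).1.subset fun z hz => hz.1
    have h1 : (1 : ℝ) ≤ N := by exact_mod_cast Nat.one_le_iff_ne_zero.mpr hN
    nlinarith [hB x hx i, abs_nonneg (x i)]
  have hpZ : (2 * (B : ℤ) ^ 2) < p := by exact_mod_cast hp
  have hB2 : (B : ℤ) ≤ (B : ℤ) ^ 2 := by
    exact_mod_cast (Nat.le_self_pow two_ne_zero B)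
  have hzero : ∀ a : ℤ, |a| < p → (a : ZMod p) = 0 → a = 0 := fun a ha h0 =>
    Int.eq_zero_of_abs_lt_dvd ((ZMod.intCast_zmod_eq_zero_iff_dvd a p).mp h0) ha
  let r : (Fin n → ℤ) → Fin n → ZMod p := fun z i => (z i : ZMod p)
  have hinj : Set.InjOn r P := fun x hx y hy hxy => funext fun i => by
    have h1 : ((x i - y i : ℤ) : ZMod p) = 0 := by
      rw [Int.cast_sub, sub_eq_zero]; exact congrFun hxy i
    refine sub_eq_zero.mp (hzero _ ?_ h1)
    have := hPB x hx i
    have := hPB y hy i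
    have := abs_sub (x i) (y i)
    linarith
  let S := hPfin.toFinset.image r
  have hScard : S.card = P.ncard := by
    rw [Finset.card_image_of_injOn (by simpa using hinj), Set.ncard_eq_toFinset_card P hPfin]
  have hmem : ∀ X ∈ S, ∃ x ∈ P, r x = X := fun X hX => by
    simpa [S] using hX
  have h := card_avoiding_mul_card_le S ?_ ?_
  · rw [hScard] at h
    refine le_trans ?_ h
    gcongr
    intro hξ X hX h0
    obtain ⟨x, hx, rfl⟩ := hmem X hX
    refine hξ x hx.2.ne_zero h0 ?_
    rw [← mulVec_smul]
    exact hsA _ hx.1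
  · intro X hX h0
    obtain ⟨x, hx, rfl⟩ := hmem X hX
    have hd : ∀ i, (p : ℤ) ∣ x i := fun i =>
      (ZMod.intCast_zmod_eq_zero_iff_dvd _ p).mp (congrFun h0 i)
    choose w hw using hd
    exact hx.2 p (Fact.out : p.Prime).two_le w (funext hw)
  · intro X hX Y hY hne hne'
    obtain ⟨x, hx, rfl⟩ := hmem X hX
    obtain ⟨y, hy, rfl⟩ := hmem Y hY
    by_contra! hall
    have hxy : ∀ i j, x i * y j = x j * y i := fun i j => by
      refine sub_eq_zero.mp (hzero _ ?_ (by push_cast; exact hall i j))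
      have h1 : |x i * y j| ≤ (B : ℤ) ^ 2 := by
        rw [abs_mul, sq]
        exact mul_le_mul (hPB x hx i) (hPB y hy j) (abs_nonneg _) (by positivity)
      have h2 : |x j * y i| ≤ (B : ℤ) ^ 2 := by
        rw [abs_mul, sq]
        exact mul_le_mul (hPB x hx j) (hPB y hy i) (abs_nonneg _) (by positivity)
      have := abs_sub (x i * y j) (x j * y i)
      linarith
    rcases hx.2.eq_or_eq_neg hy.2 hxy with rfl | rfl
    · exact hne rfl
    · exact hne' (funext fun i => by simp [r])

/-- For a fixed frame, the proportion of orthogonal sublattices modulo `p` avoiding `A` is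
eventually bounded by a multiple of the inverse volume of `A`. -/
lemma eventually_avoidRatio_le (hn : 3 ≤ n) {A : Set (Fin n → ℝ)} (hA : IsOpen A)
    (hA0 : (0 : Fin n → ℝ) ∉ A) {α : ℝ} (hα : 0 < α) (hvol : ENNReal.ofReal α < volume A)
    {g : Matrix (Fin n) (Fin n) ℝ} (hg : g.det ≠ 0) :
    ∀ᶠ N : ℕ in atTop, ∀ (p : ℕ) [Fact p.Prime], N ^ n < p → p ≤ 2 * N ^ n →
      avoidRatio p N A g ≤ ENNReal.ofReal (16 * |g.det| / α) := by
  classical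
  obtain ⟨K, hKA, hK, hαK⟩ := hA.exists_lt_isCompact hvol
  obtain ⟨r₀, hr₀, hrA⟩ := hK.exists_thickening_subset_open hA hKA
  obtain ⟨r, ⟨hr, hrr⟩, hfr⟩ := exists_null_frontier_thickening (volume : Measure (Fin n → ℝ)) K hr₀
  set U := Metric.thickening r K
  have hUA : U ⊆ A := (Metric.thickening_mono hrr.le K).trans hrA
  have hUo : IsOpen U := Metric.isOpen_thickening
  have hUb : Bornology.IsBounded U := hK.isBounded.thickening
  have hUvol : ENNReal.ofReal α < volume U :=
    hαK.trans_le (measure_mono (Metric.self_subset_thickening hr K))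
  have hUreal : α < volume.real U := by
    rw [measureReal_def]
    exact (ENNReal.ofReal_lt_iff_lt_toReal hα.le hUb.measure_lt_top.ne).mp hUvol
  have hdet : LinearMap.det (Matrix.toLin' g) ≠ 0 := by rwa [LinearMap.det_toLin']
  set s : Set (Fin n → ℝ) := (Matrix.toLin' g) ⁻¹' U
  have hc : Continuous (Matrix.toLin' g) := LinearMap.continuous_of_finiteDimensional _
  have hsA : ∀ x ∈ s, g *ᵥ x ∈ A := fun x hx => hUA hx
  have hs0 : (0 : Fin n → ℝ) ∉ s := fun h => hA0 (by simpa using hsA 0 h)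
  have hsb : Bornology.IsBounded s := by
    have hsub : s ⊆ (Matrix.toLin' g⁻¹) '' closure U := fun x hx => by
      refine ⟨g *ᵥ x, subset_closure hx, ?_⟩
      rw [toLin'_apply, mulVec_mulVec, nonsing_inv_mul _ (isUnit_iff_ne_zero.mpr hg), one_mulVec]
    exact ((hUb.isCompact_closure.image
      (LinearMap.continuous_of_finiteDimensional _)).isBounded).subset hsub
  have hsf : volume (frontier s) = 0 := by
    refine measure_mono_null (hc.frontier_preimage_subset U) ?_
    rw [Measure.addHaar_preimage_linearMap _ hdet, hfr, mul_zero]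
  have hsvol : volume.real s = volume.real U / |g.det| := by
    rw [measureReal_def, Measure.addHaar_preimage_linearMap _ hdet, LinearMap.det_toLin',
      ENNReal.toReal_mul, ENNReal.toReal_ofReal (abs_nonneg _), abs_inv, measureReal_def]
    ring
  have hgp : 0 < |g.det| := abs_pos.mpr hg
  have hsα : α / |g.det| < volume.real s := by rw [hsvol]; gcongr
  have hsm : MeasurableSet s := hc.measurable hUo.measurableSet
  obtain ⟨ρ, hρ⟩ := hsb.exists_norm_le
  obtain ⟨b, hb⟩ := exists_nat_gt ρ
  filter_upwards [eventually_le_ncard_primitive hn hsb hsm hsf hs0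
    ((by positivity : (0 : ℝ) < α / |g.det|).trans hsα), eventually_ge_atTop (2 * b ^ 2 + 1)]
    with N hN hNb p _ hp1 hp2
  have hN0 : N ≠ 0 := by omega
  have hB : ∀ x ∈ s, ∀ i, |x i| * N ≤ ((b * N : ℕ) : ℝ) := fun x hx i => by
    rw [Nat.cast_mul]
    have := (norm_le_pi_norm x i).trans ((hρ x hx).trans hb.le)
    rw [Real.norm_eq_abs] at this
    gcongr
  have hp : 2 * (b * N) ^ 2 < p := by
    refine lt_of_le_of_lt ?_ hp1
    calc 2 * (b * N) ^ 2 = (2 * b ^ 2) * N ^ 2 := by ring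
      _ ≤ N * N ^ 2 := by gcongr; omega
      _ = N ^ 3 := by ring
      _ ≤ N ^ n := Nat.pow_le_pow_right (by omega) hn
  have h := card_avoidsMod_mul_ncard_le hsA hN0 hB hp
  unfold avoidRatio
  set c := (Finset.univ.filter fun ξ : Fin n → ZMod p => AvoidsMod A N g ξ).card
  set q := {z | z ∈ scaledPts s N ∧ IsPrimitiveVec z}.ncard
  have hp0 : (0 : ℝ) < p := by exact_mod_cast (Fact.out : p.Prime).pos
  have hR : (c : ℝ) * q ≤ 2 * p * p ^ n := by exact_mod_cast h
  have hp2' : (p : ℝ) ≤ 2 * N ^ n := by exact_mod_cast hp2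
  have hNn : (0 : ℝ) < (N : ℝ) ^ n := by positivity
  have hmain : (c : ℝ) / p ^ n ≤ 16 * |g.det| / α := by
    rw [div_le_div_iff₀ (by positivity) hα]
    have h1 : (c : ℝ) * (N ^ n * (α / |g.det| / 4)) ≤ 2 * (2 * N ^ n) * p ^ n := by
      calc (c : ℝ) * (N ^ n * (α / |g.det| / 4)) ≤ c * (N ^ n * (volume.real s / 4)) := by gcongr
        _ ≤ c * q := by gcongr
        _ ≤ 2 * p * p ^ n := hR
        _ ≤ _ := by gcongr
    have h2 : (N : ℝ) ^ n * (c * α) ≤ N ^ n * (16 * |g.det| * p ^ n) := by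
      have h3 := mul_le_mul_of_nonneg_right h1 (by positivity : 0 ≤ 4 * |g.det|)
      calc (N : ℝ) ^ n * (c * α) = (c : ℝ) * (N ^ n * (α / |g.det| / 4)) * (4 * |g.det|) := by
            field_simp
        _ ≤ _ := h3
        _ = _ := by ring
    exact le_of_mul_le_mul_left h2 hNn
  calc (c : ENNReal) / (p : ENNReal) ^ n = ENNReal.ofReal ((c : ℝ) / p ^ n) := by
        rw [ENNReal.ofReal_div_of_pos (by positivity), ENNReal.ofReal_natCast,
          ENNReal.ofReal_pow hp0.le, ENNReal.ofReal_natCast]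
    _ ≤ _ := ENNReal.ofReal_le_ofReal hmain

lemma avoidRatio_le_one [NeZero p] (N : ℕ) (A : Set (Fin n → ℝ)) (g : Matrix (Fin n) (Fin n) ℝ) :
    avoidRatio p N A g ≤ 1 := by
  classical
  unfold avoidRatio
  refine ENNReal.div_le_of_le_mul ?_
  rw [one_mul]
  have h := Finset.card_filter_le (Finset.univ : Finset (Fin n → ZMod p))
    fun ξ => AvoidsMod A N g ξ
  rw [Finset.card_univ, Fintype.card_fun, ZMod.card, Fintype.card_fin] at h
  exact_mod_cast h

lemma measurable_avoidRatio [NeZero p] (N : ℕ) {A : Set (Fin n → ℝ)} (hA : IsOpen A) :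
    Measurable fun g : Fin n → Fin n → ℝ => avoidRatio p N A (Matrix.of g) := by
  classical
  unfold avoidRatio
  refine Measurable.div_const ?_ _
  simp only [Finset.card_filter]
  push_cast
  refine Finset.measurable_fun_sum _ fun ξ _ => ?_
  exact Measurable.ite (isClosed_avoidsMod hA N ξ).measurableSet measurable_const measurable_const

/-- The set of bounded frames whose lattice avoids a given open set has measure at most a
constant over the volume of the open set. -/
lemma exists_volume_avoids_le_div (hm : 2 ≤ m) {R : ℝ} (hR : 1 ≤ R) :
    ∃ C : ℝ, 0 ≤ C ∧ ∀ A : Set (Fin (m + 1) → ℝ), IsOpen A → (0 : Fin (m + 1) → ℝ) ∉ A →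
      ∀ α : ℝ, 0 < α → ENNReal.ofReal α < volume A →
        volume {h : Fin (m + 1) → Fin (m + 1) → ℝ |
          InBox R (Matrix.of h) ∧ Avoids A (Matrix.of h)} ≤ ENNReal.ofReal (C / α) := by
  obtain ⟨R', hR', C₁, D, hmain⟩ := exists_volume_avoids_le (m := m) (by omega) hR
  set K' : Set (Fin (m + 1) → Fin (m + 1) → ℝ) := {g | InBox R' (Matrix.of g)} with hK'
  have hK'm : MeasurableSet K' := (isClosed_inBox R').measurableSet
  have hK'f : volume K' ≠ ⊤ := by
    refine (Bornology.IsBounded.measure_lt_top ?_).ne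
    refine isBounded_iff_forall_norm_le.mpr ⟨R', fun g hg => ?_⟩
    refine (pi_norm_le_iff_of_nonneg (by linarith)).mpr fun i =>
      (pi_norm_le_iff_of_nonneg (by linarith)).mpr fun j => hg.1 i j
  set Δ : ℝ := (m + 1).factorial * R' ^ (m + 1)
  have hΔ : 0 ≤ Δ := by positivity
  refine ⟨C₁ * (16 * Δ) * (volume K').toReal, by positivity, fun A hA hA0 α hα hvol => ?_⟩
  have hprime : ∀ N : ℕ, ∃ p : ℕ, p.Prime ∧ (N ≠ 0 → N ^ (m + 1) < p ∧ p ≤ 2 * N ^ (m + 1)) :=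
    fun N => by
      rcases eq_or_ne N 0 with rfl | h
      · exact ⟨2, Nat.prime_two, fun h => (h rfl).elim⟩
      · obtain ⟨p, h1, h2⟩ := Nat.exists_prime_lt_and_le_two_mul (N ^ (m + 1)) (by positivity)
        exact ⟨p, h1, fun _ => h2⟩
  choose q hq hqN using hprime
  have hfact : ∀ N, Fact (q N).Prime := fun N => ⟨hq N⟩
  let f : ℕ → (Fin (m + 1) → Fin (m + 1) → ℝ) → ENNReal := fun N g =>
    avoidRatio (q N) N A (Matrix.of g)
  have hlimsup : limsup (fun N => ∫⁻ g in K', f N g) atTop ≤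
      ENNReal.ofReal (16 * Δ / α) * volume K' := by
    refine (limsup_lintegral_le (fun _ => 1) (fun N => measurable_avoidRatio N hA)
      (fun N => ae_of_all _ fun g => avoidRatio_le_one N A _) ?_).trans ?_
    · rw [lintegral_one, Measure.restrict_apply_univ]; exact hK'f
    · rw [← setLIntegral_const]
      refine setLIntegral_mono' hK'm fun g hg => ?_
      refine limsup_le_of_le ?_ ?_
      · isBoundedDefault
      · filter_upwards [eventually_avoidRatio_le (by omega) hA hA0 hα hvol (hg.det_ne_zero hR'),
          eventually_ge_atTop 1] with N hN hN1
        refine (hN (q N) (hqN N (by omega)).1 (hqN N (by omega)).2).trans ?_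
        gcongr
        exact abs_det_le hg.1
  have hev : ∀ᶠ N : ℕ in atTop, volume {h : Fin (m + 1) → Fin (m + 1) → ℝ |
      InBox R (Matrix.of h) ∧ Avoids A (Matrix.of h)} ≤ C₁ * ∫⁻ g in K', f N g := by
    filter_upwards [eventually_ge_atTop (D + 1)] with N hN
    have h1 := hqN N (by omega)
    have h2 : N ≤ N ^ (m + 1) := Nat.le_self_pow (by omega) N
    exact hmain N (q N) (by omega) h1.1.le h1.2 (by omega) A hA
  set V := volume {h : Fin (m + 1) → Fin (m + 1) → ℝ |
      InBox R (Matrix.of h) ∧ Avoids A (Matrix.of h)}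
  have hV : V ≤ C₁ * (ENNReal.ofReal (16 * Δ / α) * volume K') := by
    calc V ≤ limsup (fun N => C₁ * ∫⁻ g in K', f N g) atTop :=
          le_limsup_of_frequently_le hev.frequently (by isBoundedDefault)
      _ = C₁ * limsup (fun N => ∫⁻ g in K', f N g) atTop :=
          ENNReal.limsup_const_mul_of_ne_top (ENNReal.natCast_ne_top _)
      _ ≤ _ := by gcongr
  refine hV.trans (le_of_eq ?_)
  have h1 : volume K' = ENNReal.ofReal (volume K').toReal := (ENNReal.ofReal_toReal hK'f).symm
  rw [h1, ENNReal.toReal_ofReal ENNReal.toReal_nonneg, ← ENNReal.ofReal_natCast,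
    ← ENNReal.ofReal_mul (by positivity), ← ENNReal.ofReal_mul (by positivity)]
  congr 1
  ring

end Limit

section Orbit

variable {n m : ℕ}

lemma Qform_smul (M : Matrix (Fin n) (Fin n) ℝ) (t : ℝ) (v : Fin n → ℝ) :
    Qform M (t • v) = t ^ 2 * Qform M v := by
  unfold Qform
  rw [mulVec_smul, smul_dotProduct, dotProduct_smul, smul_eq_mul, smul_eq_mul]
  ring

lemma euclNorm_smul {t : ℝ} (ht : 0 ≤ t) (v : Fin n → ℝ) : euclNorm (t • v) = t * euclNorm v := by
  unfold euclNorm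
  simp only [Pi.smul_apply, smul_eq_mul, mul_pow]
  rw [← Finset.mul_sum, Real.sqrt_mul (sq_nonneg t), Real.sqrt_sq ht]

lemma euclNorm_nonneg (v : Fin n → ℝ) : 0 ≤ euclNorm v := Real.sqrt_nonneg _

lemma continuous_Qform (M : Matrix (Fin n) (Fin n) ℝ) : Continuous (Qform M) := by
  unfold Qform dotProduct mulVec dotProduct
  fun_prop

lemma continuous_euclNorm : Continuous (euclNorm : (Fin n → ℝ) → ℝ) := by
  unfold euclNorm
  fun_prop

/-- The vectors of length less than `r` on which the form takes a value in `(0, e)`. -/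
def smallValueSet (M : Matrix (Fin n) (Fin n) ℝ) (e r : ℝ) : Set (Fin n → ℝ) :=
  {v | 0 < Qform M v ∧ Qform M v < e ∧ euclNorm v < r}

lemma isOpen_smallValueSet (M : Matrix (Fin n) (Fin n) ℝ) (e r : ℝ) :
    IsOpen (smallValueSet M e r) :=
  (isOpen_lt continuous_const (continuous_Qform M)).inter
    ((isOpen_lt (continuous_Qform M) continuous_const).inter
      (isOpen_lt continuous_euclNorm continuous_const))

lemma zero_notMem_smallValueSet (M : Matrix (Fin n) (Fin n) ℝ) (e r : ℝ) :
    (0 : Fin n → ℝ) ∉ smallValueSet M e r := fun h => by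
  have := h.1
  simp [Qform] at this

lemma exists_lt_volume_smallValueSet {M : Matrix (Fin n) (Fin n) ℝ} {c₀ : ℝ} (hc₀ : 0 < c₀)
    (hvol : volumeAsymp M c₀) :
    ∃ T₀ : ℝ, 0 < T₀ ∧ ∀ s r : ℝ, 0 < s → T₀ * s ≤ r →
      ENNReal.ofReal (s ^ n * (c₀ / 4) * (r / (2 * s)) ^ (n - 2)) <
        volume (smallValueSet M (s ^ 2) r) := by
  have h := (hvol 0 1 one_pos).def (by positivity : (0 : ℝ) < c₀ / 2)
  obtain ⟨T₁, hT₁⟩ := eventually_atTop.mp h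
  refine ⟨2 * max T₁ 1, by positivity, fun s r hs hr => ?_⟩
  set T := r / (2 * s) with hT
  have hT1 : max T₁ 1 ≤ T := by rw [hT, le_div_iff₀ (by positivity)]; linarith
  have hTpos : 0 < T := lt_of_lt_of_le (by positivity) hT1
  have h1 := hT₁ T ((le_max_left _ _).trans hT1)
  set B := {x : Fin n → ℝ | Qform M x ∈ Set.Ioo 0 1 ∧ euclNorm x ≤ T}
  have hTn : 0 < T ^ (n - 2) := by positivity
  have h2 : c₀ / 4 * T ^ (n - 2) < (volume B).toReal := by
    rw [Real.norm_of_nonneg hTn.le, Real.norm_eq_abs, abs_le] at h1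
    nlinarith [h1.1]
  have hsub : B ⊆ (fun x => s • x) ⁻¹' smallValueSet M (s ^ 2) r := fun x hx => by
    obtain ⟨⟨hx1, hx2⟩, hx3⟩ := hx
    have hs2 : 0 < s ^ 2 := by positivity
    refine ⟨?_, ?_, ?_⟩
    · rw [Qform_smul]; positivity
    · rw [Qform_smul]; nlinarith
    · rw [euclNorm_smul hs.le]
      have : s * T = r / 2 := by rw [hT]; field_simp
      have : 0 < s * T := by positivity
      nlinarith
  have h3 : volume B ≤ ENNReal.ofReal ((s ^ n)⁻¹) * volume (smallValueSet M (s ^ 2) r) := by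
    refine (measure_mono hsub).trans (le_of_eq ?_)
    rw [Measure.addHaar_preimage_smul _ hs.ne', Module.finrank_fin_fun, abs_of_pos (by positivity)]
  have h4 : ENNReal.ofReal (c₀ / 4 * T ^ (n - 2)) < volume B :=
    (ENNReal.ofReal_lt_ofReal_iff_of_nonneg (by positivity)).mpr h2 |>.trans_le
      ENNReal.ofReal_toReal_le
  have h5 := h4.trans_le h3
  have hsn : 0 < s ^ n := by positivity
  have hne : ENNReal.ofReal (s ^ n) ≠ 0 := by simpa using hsn
  calc ENNReal.ofReal (s ^ n * (c₀ / 4) * T ^ (n - 2))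
      = ENNReal.ofReal (s ^ n) * ENNReal.ofReal (c₀ / 4 * T ^ (n - 2)) := by
        rw [mul_assoc, ENNReal.ofReal_mul hsn.le]
    _ < ENNReal.ofReal (s ^ n) * (ENNReal.ofReal ((s ^ n)⁻¹) *
          volume (smallValueSet M (s ^ 2) r)) :=
        ENNReal.mul_lt_mul_right hne ENNReal.ofReal_ne_top h5
    _ = volume (smallValueSet M (s ^ 2) r) := by
        rw [← mul_assoc, ← ENNReal.ofReal_mul hsn.le, mul_inv_cancel₀ hsn.ne', ENNReal.ofReal_one,
          one_mul]

/-- The lattice `h ℤⁿ` contains vectors of length `O(2 ^ (β k))` on which the form takes a value in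
`(0, O(2 ^ (-k)))`, for every large `k`. -/
def IsApproximable (M : Matrix (Fin n) (Fin n) ℝ) (β : ℝ) (h : Matrix (Fin n) (Fin n) ℝ) : Prop :=
  ∃ C k₀ : ℕ, ∀ k, k₀ ≤ k → ∃ x : Fin n → ℤ, x ≠ 0 ∧
    h *ᵥ (fun i => (x i : ℝ)) ∈ smallValueSet M (C * (1 / 2) ^ k) (C * ((2 : ℝ) ^ β) ^ k)

lemma exists_pow_lt_volume_smallValueSet (hn : 3 ≤ n) {M : Matrix (Fin n) (Fin n) ℝ} {c₀ : ℝ}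
    (hc₀ : 0 < c₀) (hvol : volumeAsymp M c₀) {η : ℝ} (hη : 0 < η) :
    ∃ c θ : ℝ, 0 < c ∧ 1 < θ ∧ ∀ᶠ k : ℕ in atTop, ENNReal.ofReal (c * θ ^ k) <
      volume (smallValueSet M ((1 / 2) ^ k) (((2 : ℝ) ^ (1 / ((n : ℝ) - 2) + η)) ^ k)) := by
  obtain ⟨T₀, hT₀, hT⟩ := exists_lt_volume_smallValueSet hc₀ hvol
  have hn2 : (1 : ℝ) ≤ (n : ℝ) - 2 := by
    have : (3 : ℝ) ≤ n := by exact_mod_cast hn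
    linarith
  set β := 1 / ((n : ℝ) - 2) + η with hβ
  have hβ0 : 0 < β := by positivity
  set b : ℝ := (2 : ℝ) ^ β
  have hb : 1 < b := Real.one_lt_rpow one_lt_two hβ0
  set s : ℝ := (2 : ℝ) ^ (-(1 / 2) : ℝ) with hs
  have hs0 : 0 < s := by positivity
  have hs1 : s ≤ 1 := Real.rpow_le_one_of_one_le_of_nonpos one_le_two (by norm_num)
  have hs2 : s ^ 2 = 1 / 2 := by
    rw [hs, ← Real.rpow_natCast, ← Real.rpow_mul (by norm_num)]
    norm_num
  refine ⟨c₀ / 4 * (1 / 2) ^ (n - 2), (2 : ℝ) ^ (η * ((n : ℝ) - 2)), by positivity,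
    Real.one_lt_rpow one_lt_two (by positivity), ?_⟩
  filter_upwards [(tendsto_pow_atTop_atTop_of_one_lt hb).eventually_ge_atTop T₀] with k hk
  have hsk : s ^ k ≤ 1 := pow_le_one₀ hs0.le hs1
  have h := hT (s ^ k) (b ^ k) (by positivity) (by nlinarith)
  have hsk2 : (s ^ k) ^ 2 = (1 / 2) ^ k := by rw [← pow_mul, mul_comm, pow_mul, hs2]
  rw [hsk2] at h
  convert! h using 2
  have hθ : (2 : ℝ) ^ (η * ((n : ℝ) - 2)) = s ^ n * (b / s) ^ (n - 2) := by
    have hcast : ((n - 2 : ℕ) : ℝ) = (n : ℝ) - 2 := by rw [Nat.cast_sub (by omega)]; norm_num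
    rw [hs, ← Real.rpow_sub two_pos, ← Real.rpow_natCast, ← Real.rpow_natCast,
      ← Real.rpow_mul two_pos.le, ← Real.rpow_mul two_pos.le, ← Real.rpow_add two_pos, hcast]
    congr 1
    rw [hβ]
    field_simp
    ring
  have hbs : b ^ k / (2 * s ^ k) = 1 / 2 * (b / s) ^ k := by rw [div_pow]; field_simp
  rw [hθ, hbs]
  generalize b / s = X
  generalize n - 2 = j
  ring

lemma ae_isApproximable (hm : 2 ≤ m) {M : Matrix (Fin (m + 1)) (Fin (m + 1)) ℝ} {c₀ : ℝ}
    (hc₀ : 0 < c₀) (hvol : volumeAsymp M c₀) {η : ℝ} (hη : 0 < η) :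
    ∀ᵐ h : Fin (m + 1) → Fin (m + 1) → ℝ, (Matrix.of h).det ≠ 0 →
      IsApproximable M (1 / (((m + 1 : ℕ) : ℝ) - 2) + η) (Matrix.of h) := by
  obtain ⟨c, θ, hc, hθ, hev⟩ := exists_pow_lt_volume_smallValueSet (by omega) hc₀ hvol hη
  obtain ⟨k₁, hk₁⟩ := eventually_atTop.mp hev
  set b := (2 : ℝ) ^ (1 / (((m + 1 : ℕ) : ℝ) - 2) + η)
  let A : ℕ → Set (Fin (m + 1) → ℝ) := fun k => smallValueSet M ((1 / 2) ^ k) (b ^ k)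
  have hbox : ∀ R : ℕ, ∀ᵐ h : Fin (m + 1) → Fin (m + 1) → ℝ,
      ∀ᶠ k in atTop, ¬ (InBox ((R : ℝ) + 1) (Matrix.of h) ∧ Avoids (A (k + k₁)) (Matrix.of h)) := by
    intro R
    obtain ⟨C, hC, hle⟩ := exists_volume_avoids_le_div hm (R := (R : ℝ) + 1) (by simp)
    refine ae_eventually_notMem (s := fun k => {h : Fin (m + 1) → Fin (m + 1) → ℝ |
      InBox ((R : ℝ) + 1) (Matrix.of h) ∧ Avoids (A (k + k₁)) (Matrix.of h)}) ?_
    have hsum : Summable fun k : ℕ => C / (c * θ ^ (k + k₁)) := by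
      have h1 : Summable fun k : ℕ => (θ⁻¹) ^ k :=
        summable_geometric_of_lt_one (by positivity) (inv_lt_one_of_one_lt₀ hθ)
      refine (h1.mul_left (C / (c * θ ^ k₁))).congr fun k => ?_
      rw [inv_pow, pow_add]
      field_simp
    refine ne_top_of_le_ne_top hsum.tsum_ofReal_ne_top (ENNReal.tsum_le_tsum fun k => ?_)
    exact hle _ (isOpen_smallValueSet _ _ _) (zero_notMem_smallValueSet _ _ _) _ (by positivity)
      (hk₁ _ (by omega))
  filter_upwards [ae_all_iff.mpr hbox] with h hh hdet
  obtain ⟨R, hR⟩ : ∃ R : ℕ, InBox ((R : ℝ) + 1) (Matrix.of h) := by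
    obtain ⟨R, hR⟩ := exists_nat_gt (max ‖h‖ |(Matrix.of h).det|⁻¹)
    refine ⟨R, fun i j => ?_, ?_⟩
    · have h1 := (norm_le_pi_norm (h i) j).trans (norm_le_pi_norm h i)
      rw [Real.norm_eq_abs] at h1
      have := (le_max_left _ _).trans_lt hR
      change |h i j| ≤ _
      linarith
    · have := (le_max_right _ _).trans_lt hR
      rw [inv_le_comm₀ (by positivity) (abs_pos.mpr hdet)]
      linarith
  obtain ⟨k₂, hk₂⟩ := eventually_atTop.mp (hh R)
  refine ⟨1, k₂ + k₁, fun k hk => ?_⟩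
  have h1 := hk₂ (k - k₁) (by omega)
  rw [Nat.sub_add_cancel (by omega)] at h1
  have h2 : ¬ Avoids (A k) (Matrix.of h) := fun h3 => h1 ⟨hR, h3⟩
  unfold Avoids at h2
  push Not at h2
  obtain ⟨x, hx, hxA⟩ := h2
  refine ⟨x, hx, ?_⟩
  rw [Nat.cast_one, one_mul, one_mul]
  exact hxA

lemma IsApproximable.smul {M : Matrix (Fin n) (Fin n) ℝ} {β : ℝ} {h : Matrix (Fin n) (Fin n) ℝ}
    (hh : IsApproximable M β h) {t : ℝ} (ht : 0 < t) : IsApproximable M β (t • h) := by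
  obtain ⟨C, k₀, hC⟩ := hh
  obtain ⟨D, hD⟩ := exists_nat_gt (max t (t ^ 2))
  refine ⟨D * C, k₀, fun k hk => ?_⟩
  obtain ⟨x, hx, h1, h2, h3⟩ := hC k hk
  refine ⟨x, hx, ?_⟩
  have hDt := ((le_max_left _ _).trans_lt hD).le
  have hDt2 := ((le_max_right _ _).trans_lt hD).le
  rw [smul_mulVec]
  set v := h *ᵥ fun i => (x i : ℝ)
  have h4 := euclNorm_nonneg v
  push_cast
  refine ⟨?_, ?_, ?_⟩
  · rw [Qform_smul]; positivity
  · rw [Qform_smul]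
    calc t ^ 2 * Qform M v < t ^ 2 * ((C : ℝ) * (1 / 2) ^ k) := by gcongr
      _ ≤ (D : ℝ) * (C * (1 / 2) ^ k) := by gcongr
      _ = _ := by ring
  · rw [euclNorm_smul ht.le]
    calc t * euclNorm v < t * (C * ((2 : ℝ) ^ β) ^ k) := by gcongr
      _ ≤ D * (C * ((2 : ℝ) ^ β) ^ k) := by gcongr
      _ = _ := by ring

lemma measurableSet_isApproximable (M : Matrix (Fin n) (Fin n) ℝ) (β : ℝ) :
    MeasurableSet {h : Fin n → Fin n → ℝ | IsApproximable M β (Matrix.of h)} := by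
  refine measurableSet_setOfPred.mpr ?_
  refine Measurable.exists fun C => Measurable.exists fun k₀ => Measurable.forall fun k =>
    Measurable.imp measurable_const (Measurable.exists fun x => Measurable.and measurable_const ?_)
  exact measurableSet_setOfPred.mp ((isOpen_smallValueSet M _ _).preimage
    (continuous_of_mulVec fun i => (x i : ℝ))).measurableSet

lemma IsApproximable.exists_small_values {M : Matrix (Fin n) (Fin n) ℝ} {β γ : ℝ} (hβ : 0 < β)
    (hβγ : β < γ) {h : Matrix (Fin n) (Fin n) ℝ} (hh : IsApproximable M β h) :
    ∃ ε₀ : ℝ, 0 < ε₀ ∧ ∀ ε : ℝ, 0 < ε → ε < ε₀ → ∃ x : Fin n → ℤ, x ≠ 0 ∧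
      euclNorm (h *ᵥ fun i => (x i : ℝ)) < ε ^ (-γ) ∧
      0 < Qform M (h *ᵥ fun i => (x i : ℝ)) ∧ Qform M (h *ᵥ fun i => (x i : ℝ)) < ε := by
  obtain ⟨C, k₀, hC⟩ := hh
  have hev1 : ∀ᶠ ε : ℝ in nhdsWithin 0 (Set.Ioi 0), (C : ℝ) * (2 * (C + 1)) ^ β ≤ ε ^ (-(γ - β)) :=
    (tendsto_rpow_neg_nhdsGT_zero (by linarith)).eventually_ge_atTop _
  have hev2 : ∀ᶠ ε : ℝ in nhdsWithin 0 (Set.Ioi 0), ε < (1 / 2) ^ k₀ :=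
    nhdsWithin_le_nhds (eventually_lt_nhds (by positivity))
  obtain ⟨ε₀, hε₀, hsub⟩ := mem_nhdsGT_iff_exists_Ioo_subset.mp (hev1.and hev2)
  refine ⟨ε₀, hε₀, fun ε hε hε' => ?_⟩
  obtain ⟨h1, h2⟩ := hsub ⟨hε, hε'⟩
  have hε1 : ε < 1 := h2.trans_le (pow_le_one₀ (by norm_num) (by norm_num))
  have hx1 : 1 ≤ ((C : ℝ) + 1) / ε := by
    rw [le_div_iff₀ hε]
    have : (0 : ℝ) ≤ C := Nat.cast_nonneg C
    linarith
  obtain ⟨k, hk1, hk2⟩ := exists_nat_pow_near hx1 (one_lt_two : (1 : ℝ) < 2)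
  have hk3 : ((C : ℝ) + 1) * (1 / 2) ^ (k + 1) < ε := by
    rw [div_lt_iff₀ hε] at hk2
    rw [div_pow, one_pow, mul_one_div, div_lt_iff₀ (by positivity)]
    linarith
  have hk4 : k₀ ≤ k + 1 := by
    by_contra! hlt
    have h3 : ((1 : ℝ) / 2) ^ k₀ ≤ (1 / 2) ^ (k + 1) :=
      pow_le_pow_of_le_one (by norm_num) (by norm_num) hlt.le
    have h4 : (0 : ℝ) ≤ C * (1 / 2) ^ (k + 1) := by positivity
    linarith
  obtain ⟨x, hx, hx2, hx3, hx4⟩ := hC (k + 1) hk4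
  refine ⟨x, hx, ?_, hx2, ?_⟩
  · refine hx4.trans_le ?_
    have h5 : ((2 : ℝ) ^ β) ^ (k + 1) ≤ (2 * (C + 1)) ^ β * ε ^ (-β) := by
      calc ((2 : ℝ) ^ β) ^ (k + 1) = ((2 : ℝ) ^ (k + 1)) ^ β := by
            rw [← Real.rpow_natCast, ← Real.rpow_mul two_pos.le, mul_comm,
              Real.rpow_mul two_pos.le, Real.rpow_natCast]
        _ ≤ (2 * (C + 1) * ε⁻¹) ^ β := by
            gcongr
            rw [pow_succ, mul_assoc, ← div_eq_mul_inv]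
            linarith
        _ = _ := by
            rw [Real.mul_rpow (by positivity) (by positivity), Real.inv_rpow hε.le,
              Real.rpow_neg hε.le]
    calc (C : ℝ) * ((2 : ℝ) ^ β) ^ (k + 1) ≤ C * ((2 * (C + 1)) ^ β * ε ^ (-β)) := by gcongr
      _ = C * (2 * (C + 1)) ^ β * ε ^ (-β) := by ring
      _ ≤ ε ^ (-(γ - β)) * ε ^ (-β) := by gcongr
      _ = ε ^ (-γ) := by rw [← Real.rpow_add hε]; congr 1; ring
  · refine hx3.trans_le (le_trans ?_ hk3.le)
    gcongr
    linarith

end Orbit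

section Haar

variable {n : ℕ}

instance (n : ℕ) : BorelSpace (SLR n) := ⟨rfl⟩

/-- The array of entries of a unimodular matrix. -/
def entries (g : SLR n) : Fin n → Fin n → ℝ := (g : Matrix (Fin n) (Fin n) ℝ)

lemma isClosedEmbedding_entries : Topology.IsClosedEmbedding (entries : SLR n → _) := by
  refine ⟨⟨⟨rfl⟩, Subtype.val_injective⟩, ?_⟩
  have h : Set.range (entries : SLR n → _) = {h : Fin n → Fin n → ℝ | (Matrix.of h).det = 1} :=
    Set.ext fun h => ⟨fun ⟨g, hg⟩ => hg ▸ g.2, fun hh => ⟨⟨Matrix.of h, hh⟩, rfl⟩⟩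
  rw [h]
  exact isClosed_eq (Continuous.matrix_det continuous_id) continuous_const

instance (n : ℕ) : SecondCountableTopology (SLR n) :=
  isClosedEmbedding_entries.isEmbedding.secondCountableTopology

instance (n : ℕ) : SigmaCompactSpace (SLR n) :=
  isClosedEmbedding_entries.sigmaCompactSpace

instance (n : ℕ) : IsTopologicalGroup (SLR n) := Matrix.SpecialLinearGroup.topologicalGroup

lemma measurable_iff_entries {α : Type*} [MeasurableSpace α] {f : α → SLR n} :
    Measurable f ↔ Measurable fun a => entries (f a) := by
  have h : instMeasurableSpaceSLR n =
      MeasurableSpace.comap (entries : SLR n → _) inferInstance := by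
    rw [BorelSpace.measurable_eq (α := Fin n → Fin n → ℝ), ← borel_comap]
    rfl
  exact h ▸ measurable_comap_iff

/-- Left multiplication by a matrix, as a linear map on arrays. -/
noncomputable def leftMul (F : Matrix (Fin n) (Fin n) ℝ) :
    (Fin n → Fin n → ℝ) →ₗ[ℝ] (Fin n → Fin n → ℝ) where
  toFun h := F * Matrix.of h
  map_add' h h' := Matrix.mul_add F (Matrix.of h) (Matrix.of h')
  map_smul' t h := Matrix.mul_smul F t (Matrix.of h)

lemma leftMul_apply (F : Matrix (Fin n) (Fin n) ℝ) (h : Fin n → Fin n → ℝ) :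
    Matrix.of (leftMul F h) = F * Matrix.of h := rfl

lemma volume_leftMul_preimage {F : Matrix (Fin n) (Fin n) ℝ} (hF : F.det = 1)
    (W : Set (Fin n → Fin n → ℝ)) : volume (leftMul F ⁻¹' W) = volume W := by
  let T : (Fin n → Fin n → ℝ) ≃ₗ[ℝ] (Fin n → Fin n → ℝ) :=
    { toFun := fun h i j => h j i
      invFun := fun h i j => h j i
      map_add' := fun _ _ => rfl
      map_smul' := fun _ _ => rfl
      left_inv := fun _ => rfl
      right_inv := fun _ => rfl }
  have hconj : leftMul F = (T : (Fin n → Fin n → ℝ) →ₗ[ℝ] (Fin n → Fin n → ℝ)) ∘ₗ rightMul Fᵀ ∘ₗ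
      (T.symm : (Fin n → Fin n → ℝ) →ₗ[ℝ] (Fin n → Fin n → ℝ)) := by
    refine LinearMap.ext fun h => funext fun i => funext fun j => ?_
    have h1 : rightMul Fᵀ (T.symm h) = (Matrix.of h)ᵀ * Fᵀ := rightMul_apply Fᵀ (T.symm h)
    change (F * Matrix.of h) i j = rightMul Fᵀ (T.symm h) j i
    rw [h1, ← transpose_mul, transpose_apply]
  have hdet : LinearMap.det (leftMul F) = 1 := by
    rw [hconj, LinearMap.det_conj, rightMul, LinearMap.det_pi]
    simp [hF]
  rw [Measure.addHaar_preimage_linearMap _ (by rw [hdet]; exact one_ne_zero), hdet]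
  simp

/-- The arrays with positive determinant. -/
def posDet (n : ℕ) : Set (Fin n → Fin n → ℝ) := {h | 0 < (Matrix.of h).det}

lemma isOpen_posDet : IsOpen (posDet n) :=
  isOpen_lt continuous_const (Continuous.matrix_det continuous_id)

open Classical in
/-- Rescale a matrix of positive determinant to a unimodular one. -/
noncomputable def toUnimodular [NeZero n] (h : Fin n → Fin n → ℝ) : SLR n :=
  if hh : 0 < (Matrix.of h).det then
    ⟨(Matrix.of h).det ^ (-(1 / (n : ℝ))) • Matrix.of h, by
      rw [det_smul, Fintype.card_fin, ← Real.rpow_natCast, ← Real.rpow_mul hh.le, neg_mul,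
        one_div_mul_cancel (Nat.cast_ne_zero.mpr (NeZero.ne n)), Real.rpow_neg_one,
        inv_mul_cancel₀ hh.ne']⟩
  else 1

lemma coe_toUnimodular [NeZero n] {h : Fin n → Fin n → ℝ} (hh : h ∈ posDet n) :
    (toUnimodular h : Matrix (Fin n) (Fin n) ℝ) =
      (Matrix.of h).det ^ (-(1 / (n : ℝ))) • Matrix.of h :=
  congrArg Subtype.val (dif_pos hh)

lemma measurable_toUnimodular [NeZero n] :
    Measurable (toUnimodular : (Fin n → Fin n → ℝ) → SLR n) := by
  classical
  rw [measurable_iff_entries]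
  have h : (fun h : Fin n → Fin n → ℝ => entries (toUnimodular h)) = fun h => if h ∈ posDet n then
      ((Matrix.of h).det ^ (-(1 / (n : ℝ))) • h : Fin n → Fin n → ℝ) else entries 1 :=
    funext fun h => by
      split_ifs with hh
      · exact coe_toUnimodular hh
      · exact congrArg entries (dif_neg hh)
  rw [h]
  have hcont : Continuous fun h : Fin n → Fin n → ℝ => (Matrix.of h).det :=
    Continuous.matrix_det continuous_id
  have hsmul : Measurable fun h : Fin n → Fin n → ℝ => (Matrix.of h).det ^ (-(1 / (n : ℝ))) • h :=
    (hcont.measurable.pow_const _).smul measurable_id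
  exact hsmul.ite isOpen_posDet.measurableSet measurable_const

lemma leftMul_mem_posDet {g : SLR n} {h : Fin n → Fin n → ℝ} :
    leftMul (g : Matrix (Fin n) (Fin n) ℝ) h ∈ posDet n ↔ h ∈ posDet n := by
  change 0 < (Matrix.of (leftMul _ h)).det ↔ 0 < (Matrix.of h).det
  rw [leftMul_apply, det_mul, g.2, one_mul]

lemma toUnimodular_leftMul [NeZero n] (g : SLR n) {h : Fin n → Fin n → ℝ} (hh : h ∈ posDet n) :
    toUnimodular (leftMul (g : Matrix (Fin n) (Fin n) ℝ) h) = g * toUnimodular h := by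
  refine Subtype.ext ?_
  rw [coe_toUnimodular (leftMul_mem_posDet.mpr hh), Matrix.SpecialLinearGroup.coe_mul,
    coe_toUnimodular hh, leftMul_apply, det_mul, g.2, one_mul, Matrix.mul_smul]

/-- The measure on `SL(n, ℝ)` whose value on a set is the volume of the cone over it. -/
noncomputable def coneMeasure (n : ℕ) [NeZero n] : Measure (SLR n) :=
  (volume.restrict (posDet n)).map toUnimodular

lemma coneMeasure_apply [NeZero n] {s : Set (SLR n)} (hs : MeasurableSet s) :
    coneMeasure n s = volume (toUnimodular ⁻¹' s ∩ posDet n) := by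
  rw [coneMeasure, Measure.map_apply measurable_toUnimodular hs,
    Measure.restrict_apply (measurable_toUnimodular hs)]

instance [NeZero n] : SFinite (coneMeasure n) := by
  unfold coneMeasure; infer_instance

instance [NeZero n] : (coneMeasure n).IsMulLeftInvariant where
  map_mul_left_eq_self g := by
    refine Measure.ext fun s hs => ?_
    have hg : Measurable fun x : SLR n => g * x := measurable_const_mul g
    rw [Measure.map_apply hg hs, coneMeasure_apply (hg hs), coneMeasure_apply hs,
      ← volume_leftMul_preimage g.2 (toUnimodular ⁻¹' s ∩ posDet n)]
    congr 1
    ext h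
    simp only [Set.mem_inter_iff, Set.mem_preimage, leftMul_mem_posDet]
    refine and_congr_left fun hh => ?_
    rw [toUnimodular_leftMul g hh]

lemma coneMeasure_ne_zero [NeZero n] : coneMeasure n ≠ 0 := fun h => by
  have h1 := coneMeasure_apply (n := n) MeasurableSet.univ
  rw [h, Set.preimage_univ, Set.univ_inter] at h1
  refine (isOpen_posDet.measure_pos volume ⟨fun i j => (1 : Matrix (Fin n) (Fin n) ℝ) i j, ?_⟩).ne
    h1
  change 0 < (1 : Matrix (Fin n) (Fin n) ℝ).det
  rw [det_one]
  exact one_pos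

/-- A conical property valid for almost every invertible matrix holds almost everywhere
on `SL(n, ℝ)`. -/
lemma ae_specialLinear_of_ae [NeZero n] (μ : Measure (SLR n)) [μ.IsHaarMeasure]
    {P : Matrix (Fin n) (Fin n) ℝ → Prop}
    (hP : MeasurableSet {h : Fin n → Fin n → ℝ | P (Matrix.of h)})
    (hsmul : ∀ h, P h → ∀ t : ℝ, 0 < t → P (t • h))
    (hae : ∀ᵐ h : Fin n → Fin n → ℝ, (Matrix.of h).det ≠ 0 → P (Matrix.of h)) :
    ∀ᵐ g : SLR n ∂μ, P g := by
  refine (absolutelyContinuous_of_isMulLeftInvariant μ (coneMeasure n) coneMeasure_ne_zero).ae_le ?_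
  have hm : MeasurableSet {g : SLR n | P g} :=
    isClosedEmbedding_entries.continuous.measurable hP
  change coneMeasure n {g : SLR n | P g}ᶜ = 0
  rw [coneMeasure_apply hm.compl]
  refine measure_mono_null ?_ hae
  rintro h ⟨h1, h2⟩ h3
  have h4 : 0 < (Matrix.of h).det := h2
  refine h1 ?_
  change P (toUnimodular h : Matrix (Fin n) (Fin n) ℝ)
  rw [coe_toUnimodular h2]
  exact hsmul _ (h3 h4.ne') _ (Real.rpow_pos_of_pos h4 _)

end Haar

/-- Let `n ≥ 3` and let `Q₀` be a real quadratic form on `ℝ^n` satisfying the volume asymptotic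
condition with constant `c₀ > 0`. For every `δ > 0`, for Haar-almost every `g ∈ SL(n,ℝ)` there
is `ε₀ > 0` such that for all `0 < ε < ε₀` there is a nonzero `x ∈ ℤ^n` with
`‖gx‖ < ε^{-(1/(n-2) + δ)}` and `0 < Q₀(gx) < ε`. -/
theorem small_values_along_orbit
    (n : ℕ) (hn : 3 ≤ n) (M : Matrix (Fin n) (Fin n) ℝ) (hM : M.IsSymm)
    (c₀ : ℝ) (hc₀ : 0 < c₀) (hvol : volumeAsymp M c₀)
    (δ : ℝ) (hδ : 0 < δ)
    (μ : Measure (SLR n)) [μ.IsHaarMeasure] :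
    ∀ᵐ g : SLR n ∂μ, ∃ ε₀ : ℝ, 0 < ε₀ ∧
      ∀ ε : ℝ, 0 < ε → ε < ε₀ →
        ∃ x : Fin n → ℤ, x ≠ 0 ∧
          euclNorm ((g : Matrix (Fin n) (Fin n) ℝ).mulVec fun i => (x i : ℝ)) <
            ε ^ (-(1 / ((n : ℝ) - 2) + δ)) ∧
          0 < Qform M ((g : Matrix (Fin n) (Fin n) ℝ).mulVec fun i => (x i : ℝ)) ∧
          Qform M ((g : Matrix (Fin n) (Fin n) ℝ).mulVec fun i => (x i : ℝ)) < ε := by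
  obtain ⟨m, rfl⟩ := Nat.exists_eq_add_of_le' (show 1 ≤ n by omega)
  have h := ae_specialLinear_of_ae μ (measurableSet_isApproximable M _)
    (fun _ hh _ ht => hh.smul ht) (ae_isApproximable (by omega) hc₀ hvol (half_pos hδ))
  have hn2 : (1 : ℝ) ≤ ((m + 1 : ℕ) : ℝ) - 2 := by
    have : (3 : ℝ) ≤ ((m + 1 : ℕ) : ℝ) := by exact_mod_cast hn
    linarith
  filter_upwards [h] with g hg
  exact hg.exists_small_values (by positivity) (by linarith)
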